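/- arXiv:math/0409031 — 5 statements merged into one kernel-verified Lean document; each statement's English description precedes it below -/
import Mathlib

section
/- Let A be an associative unital ℂ-algebra, η, θ ∈ ℂ, and g, γ_1, γ_2, κ_1, κ_2, λ ∈ A such that: (i) g, γ_1, γ_2 pairwise commute; (ii) κ_s γ_s − γ_s κ_s = −η κ_s for s = 1,2, and κ_s commutes with γ_t for s ≠ t and with g; (iii) λ commutes with γ_1 and γ_2; (iv) (γ_1 − γ_2 − η)κ_1κ_2 = (γ_1 − γ_2 + η)κ_2κ_1; (v) (γ_s − g − θ)κ_sλ = (γ_s − g + θ)λκ_s for s = 1,2; (vi) for every integer p with |p| ≤ 2, the elements γ_1 − γ_2 + pη, γ_s − g + θ + pη and γ_s − g − θ + pη (s = 1,2) are invertible in A. Then [κ_1,[κ_2,λ]] + [κ_2,[κ_1,λ]] = 2θ(2θ+η) · (κ̃_1κ̃_2 + κ̃_2κ̃_1) · λ, where κ̃_s := (γ_s − g + θ)^{−1} κ_s. -/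
/-!
Put `u = γ₁ - g + θ`, `v = γ₂ - g + θ`, `X = κ₁κ₂λ`, `Y = κ₂κ₁λ`. Since `κ₁` commutes with `v` and
`κ₂` with `u`, the exchange relations `u(λκ₁) = (u - 2θ)κ₁λ` and `v(λκ₂) = (v - 2θ)κ₂λ` allow `λ`
to be moved to the right in every term of the symmetrised double commutator, at the cost of left
coefficients in the commutative subalgebra generated by `u`, `v` (`exchange_through`). After
multiplication by `uv` the left-hand side becomes `(2θ(u - v) + 4θ²)X + (2θ(v - u) + 4θ²)Y`, and
the right-hand side becomes `2θ(2θ + η)(X + Y)`. Their difference is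
`2θ((u - v - η)X - (u - v + η)Y)`, which vanishes by the exchange relation between `κ₁κ₂` and
`κ₂κ₁` (`cleared_identity`). Finally `uv` is invertible and can be cancelled.
-/

/-- The commutator `[x,y] = xy - yx`. -/
def cbrk {A : Type*} [Ring A] (x y : A) : A := x * y - y * x

/-- Moving `l` to the right through `y`, and through `x * y`, when `u` intertwines `l * x` with
`x * l`, `v` intertwines `l * y` with `y * l`, and `x` commutes with `v`. -/
theorem exchange_through {A : Type*} [Ring A] [Algebra ℂ A] (θ : ℂ) (u v x y l : A)
    (huv : u * v = v * u) (hxv : x * v = v * x)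
    (hx : u * (l * x) = (u - (2 * θ) • 1) * (x * l))
    (hy : v * (l * y) = (v - (2 * θ) • 1) * (y * l)) :
    v * (x * l * y) = (v - (2 * θ) • 1) * (x * y * l) ∧
      u * v * (l * x * y) = (u - (2 * θ) • 1) * (v - (2 * θ) • 1) * (x * y * l) := by
  have h1 : v * (x * l * y) = (v - (2 * θ) • 1) * (x * y * l) := by
    have hc : x * (v - (2 * θ) • 1) = (v - (2 * θ) • 1) * x := by
      simp [mul_sub, sub_mul, hxv]
    calc v * (x * l * y) = (v * x) * (l * y) := by simp only [mul_assoc]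
      _ = x * (v * (l * y)) := by rw [← hxv, mul_assoc]
      _ = (x * (v - (2 * θ) • 1)) * (y * l) := by rw [hy, mul_assoc]
      _ = (v - (2 * θ) • 1) * (x * y * l) := by rw [hc]; simp only [mul_assoc]
  refine ⟨h1, ?_⟩
  have hc : v * (u - (2 * θ) • 1) = (u - (2 * θ) • 1) * v := by
    simp [mul_sub, sub_mul, huv]
  calc u * v * (l * x * y) = v * (u * (l * x)) * y := by rw [huv]; simp only [mul_assoc]
    _ = (v * (u - (2 * θ) • 1)) * (x * l * y) := by rw [hx]; simp only [mul_assoc]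
    _ = (u - (2 * θ) • 1) * (v * (x * l * y)) := by rw [hc, mul_assoc]
    _ = _ := by rw [h1, ← mul_assoc]

/-- The identity of left coefficients obtained once `l` stands on the right everywhere and the
denominators `u`, `v` are cleared. -/
theorem cleared_identity {A : Type*} [Ring A] [Algebra ℂ A] (θ η : ℂ) (u v X Y : A)
    (huv : u * v = v * u)
    (hXY : (u - v - η • 1) * X = (u - v + η • 1) * Y) :
    u * v * X + u * v * Y - (2 : ℂ) • (u * ((v - (2 * θ) • 1) * X))
        - (2 : ℂ) • (v * ((u - (2 * θ) • 1) * Y))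
        + (v - (2 * θ) • 1) * (u - (2 * θ) • 1) * Y
        + (u - (2 * θ) • 1) * (v - (2 * θ) • 1) * X
      = (2 * θ * (2 * θ + η)) • (X + Y) := by
  have h : u * X - v * X - η • X = u * Y - v * Y + η • Y := by
    simpa [sub_mul, add_mul] using hXY
  simp only [mul_sub, sub_mul, mul_smul_comm, smul_mul_assoc, one_mul, mul_one, huv, ← mul_assoc]
  linear_combination (norm := module) (2 * θ) • h

/-- The `n = 2` case of the combinatorial lemma:
`[κ₁,[κ₂,lam]] + [κ₂,[κ₁,lam]] = 2θ(2θ+η)·(κ̃₁κ̃₂ + κ̃₂κ̃₁)·lam`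
with `κ̃ₛ = (γₛ - g + θ)⁻¹ κₛ`. -/
theorem combinatorial_lemma_n2 (A : Type*) [Ring A] [Algebra ℂ A] (η θ : ℂ)
    (g γ1 γ2 κ1 κ2 lam : A)
    (hgγ1 : g * γ1 = γ1 * g) (hgγ2 : g * γ2 = γ2 * g) (hγγ : γ1 * γ2 = γ2 * γ1)
    (hκγ1 : κ1 * γ1 - γ1 * κ1 = -(algebraMap ℂ A η * κ1))
    (hκγ2 : κ2 * γ2 - γ2 * κ2 = -(algebraMap ℂ A η * κ2))
    (hκ1γ2 : κ1 * γ2 = γ2 * κ1) (hκ2γ1 : κ2 * γ1 = γ1 * κ2)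
    (hκ1g : κ1 * g = g * κ1) (hκ2g : κ2 * g = g * κ2)
    (hlg1 : lam * γ1 = γ1 * lam) (hlg2 : lam * γ2 = γ2 * lam)
    (hbraid : (γ1 - γ2 - algebraMap ℂ A η) * (κ1 * κ2)
      = (γ1 - γ2 + algebraMap ℂ A η) * (κ2 * κ1))
    (hκl1 : (γ1 - g - algebraMap ℂ A θ) * (κ1 * lam)
      = (γ1 - g + algebraMap ℂ A θ) * (lam * κ1))
    (hκl2 : (γ2 - g - algebraMap ℂ A θ) * (κ2 * lam)
      = (γ2 - g + algebraMap ℂ A θ) * (lam * κ2))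
    (hinv : ∀ p : ℤ, |p| ≤ 2 →
      IsUnit (γ1 - γ2 + algebraMap ℂ A ((p : ℂ) * η)) ∧
      IsUnit (γ1 - g + algebraMap ℂ A (θ + (p : ℂ) * η)) ∧
      IsUnit (γ1 - g + algebraMap ℂ A (-θ + (p : ℂ) * η)) ∧
      IsUnit (γ2 - g + algebraMap ℂ A (θ + (p : ℂ) * η)) ∧
      IsUnit (γ2 - g + algebraMap ℂ A (-θ + (p : ℂ) * η))) :
    cbrk κ1 (cbrk κ2 lam) + cbrk κ2 (cbrk κ1 lam)
      = algebraMap ℂ A (2 * θ * (2 * θ + η)) *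
          ((Ring.inverse (γ1 - g + algebraMap ℂ A θ) * κ1) *
              (Ring.inverse (γ2 - g + algebraMap ℂ A θ) * κ2)
            + (Ring.inverse (γ2 - g + algebraMap ℂ A θ) * κ2) *
              (Ring.inverse (γ1 - g + algebraMap ℂ A θ) * κ1)) * lam := by
  simp only [Algebra.algebraMap_eq_smul_one] at *
  obtain ⟨-, hu, -, hv, -⟩ := hinv 0 (by norm_num)
  simp only [Int.cast_zero, zero_mul, add_zero] at hu hv
  obtain ⟨u, hu'⟩ : ∃ u, u = γ1 - g + θ • (1 : A) := ⟨_, rfl⟩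
  obtain ⟨v, hv'⟩ : ∃ v, v = γ2 - g + θ • (1 : A) := ⟨_, rfl⟩
  rw [← hu'] at hu hκl1
  rw [← hv'] at hv hκl2
  rw [← hu', ← hv']
  have huv : u * v = v * u := by
    rw [hu', hv']
    simp only [mul_add, mul_sub, add_mul, sub_mul, hgγ1, hgγ2, hγγ, mul_smul_comm,
      smul_mul_assoc, one_mul, mul_one]
    module
  have h1v : κ1 * v = v * κ1 := by
    simp [hv', mul_add, mul_sub, add_mul, sub_mul, hκ1γ2, hκ1g]
  have h2u : κ2 * u = u * κ2 := by
    simp [hu', mul_add, mul_sub, add_mul, sub_mul, hκ2γ1, hκ2g]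
  have hx : u * (lam * κ1) = (u - (2 * θ) • 1) * (κ1 * lam) := by
    rw [← hκl1, hu']; congr 1; module
  have hy : v * (lam * κ2) = (v - (2 * θ) • 1) * (κ2 * lam) := by
    rw [← hκl2, hv']; congr 1; module
  obtain ⟨e1, e2⟩ := exchange_through θ u v κ1 κ2 lam huv h1v hx hy
  obtain ⟨f1, f2⟩ := exchange_through θ v u κ2 κ1 lam huv.symm h2u hy hx
  have hXY : (u - v - η • 1) * (κ1 * κ2 * lam) = (u - v + η • 1) * (κ2 * κ1 * lam) := by
    have hd : u - v = γ1 - γ2 := by rw [hu', hv']; abel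
    rw [hd, ← mul_assoc, hbraid, mul_assoc]
  have key := cleared_identity θ η u v _ _ huv hXY
  rw [← e1, ← f1, ← e2, ← f2] at key
  have hiu : u * Ring.inverse u = 1 := Ring.mul_inverse_cancel u hu
  have hiv : v * Ring.inverse v = 1 := Ring.mul_inverse_cancel v hv
  -- `κ₁` commutes with `v`, hence with its inverse; likewise `κ₂` and `u`.
  have r1 : u * v * (Ring.inverse u * κ1 * (Ring.inverse v * κ2)) = κ1 * κ2 := by
    calc _ = v * (u * Ring.inverse u) * κ1 * (Ring.inverse v * κ2) := by
            rw [huv]; simp only [mul_assoc]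
      _ = κ1 * (v * Ring.inverse v) * κ2 := by
            rw [hiu, mul_one, ← h1v]; simp only [mul_assoc]
      _ = _ := by rw [hiv, mul_one]
  have r2 : u * v * (Ring.inverse v * κ2 * (Ring.inverse u * κ1)) = κ2 * κ1 := by
    calc _ = u * (v * Ring.inverse v) * κ2 * (Ring.inverse u * κ1) := by
            simp only [mul_assoc]
      _ = κ2 * (u * Ring.inverse u) * κ1 := by
            rw [hiv, mul_one, ← h2u]; simp only [mul_assoc]
      _ = _ := by rw [hiu, mul_one]
  apply (hu.mul hv).mul_left_cancel
  have hR : ∀ Z W : A, u * v * ((2 * θ * (2 * θ + η)) • (1 : A) * (Z + W) * lam)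
      = (2 * θ * (2 * θ + η)) • ((u * v * Z) * lam + (u * v * W) * lam) := by
    intro Z W
    simp only [smul_mul_assoc, mul_smul_comm, one_mul, add_mul, mul_add, mul_assoc]
    module
  rw [hR, r1, r2, ← key]
  have k1 : u * (v * (κ1 * lam * κ2)) = u * v * (κ1 * lam * κ2) := (mul_assoc _ _ _).symm
  have k2 : v * (u * (κ2 * lam * κ1)) = u * v * (κ2 * lam * κ1) := by
    rw [huv, ← mul_assoc]
  rw [k1, k2, ← huv]
  simp only [cbrk, mul_add, mul_sub, sub_mul, ← mul_assoc]
  module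
end

section
/- Let A be an associative unital ℂ-algebra, η, θ ∈ ℂ, and g, γ_1, γ_2, γ_3, κ_1, κ_2, κ_3, λ ∈ A such that: (i) g, γ_1, γ_2, γ_3 pairwise commute; (ii) κ_s γ_s − γ_s κ_s = −η κ_s for each s, and κ_s commutes with γ_t for s ≠ t and with g; (iii) λ commutes with each γ_s; (iv) (γ_s − γ_t − η)κ_sκ_t = (γ_s − γ_t + η)κ_tκ_s for all s ≠ t; (v) (γ_s − g − θ)κ_sλ = (γ_s − g + θ)λκ_s for each s; (vi) for every integer p with |p| ≤ 3 and all s ≠ t, the elements γ_s − γ_t + pη, γ_s − g + θ + pη and γ_s − g − θ + pη are invertible in A. Then Σ_{σ∈S_3} [κ_{σ(1)},[κ_{σ(2)},[κ_{σ(3)},λ]]] = 2θ(2θ+η)(2θ+2η) · (Σ_{σ∈S_3} κ̃_{σ(1)}κ̃_{σ(2)}κ̃_{σ(3)}) · λ, where κ̃_s := (γ_s − g + θ)^{−1} κ_s. -/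
/-!
Put `x s = γ s - g`. The generator `κ s` commutes with `x t` for `t ≠ s`, so as long as every word
contains each of `κ 0`, `κ 1`, `κ 2` exactly once, all functions of the `x s` can be collected on
the left without any shift. The relation `hκl` moves `lam` to the far right of a word, each exchange
with `κ s` producing the ratio `(x s - θ) / (x s + θ)` (`move_one`, `move_two`, `move_three`), and
`hbraid` reorders the `κ s`. Both sides thus become a rational function of
`x 0, x 1, x 2, η, θ` times the word `κ 0 * κ 1 * κ 2 * lam`, and the claim is a polynomial identity
once the invertible denominators are cleared.

The elements `x s`, `η`, `θ` generate a commutative ring `B` mapping to `A`. Regarding `A` as a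
`B`-module turns the last step into the statement `smul_key` about modules over a commutative ring,
in which denominators are cleared by scalars acting injectively.
-/

theorem sum_perm_fin_three {M : Type*} [AddCommMonoid M] (F : Fin 3 → Fin 3 → Fin 3 → M) :
    ∑ σ : Equiv.Perm (Fin 3), F (σ 0) (σ 1) (σ 2)
      = F 0 1 2 + F 1 0 2 + F 0 2 1 + F 1 2 0 + F 2 0 1 + F 2 1 0 := by
  have h : (Finset.univ : Finset (Equiv.Perm (Fin 3))) =
      {1, Equiv.swap 0 1, Equiv.swap 1 2, Equiv.swap 0 1 * Equiv.swap 1 2,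
        Equiv.swap 1 2 * Equiv.swap 0 1, Equiv.swap 0 2} := by decide
  rw [h, Finset.sum_insert (by decide), Finset.sum_insert (by decide),
    Finset.sum_insert (by decide), Finset.sum_insert (by decide), Finset.sum_insert (by decide),
    Finset.sum_singleton]
  have e1 : (Equiv.swap (0 : Fin 3) 1) 2 = 2 := by decide
  have e2 : (Equiv.swap (1 : Fin 3) 2) 0 = 0 := by decide
  have e3 : (Equiv.swap (0 : Fin 3) 2) 1 = 1 := by decide
  simp [e1, e2, e3, add_assoc]

section Words

variable {A : Type*} [Ring A] {a b c l pa pb pc qa qb qc : A}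

/-- Moving `lam` past the letter `c`, which is the last one. In `move_one`, `move_two` and
`move_three` the letters `a, b, c` stand for the three `κ s` in some order, `l` for `lam`, and
`p`, `q` for `x s + θ`, `x s - θ`. -/
theorem move_one (hc : pc * (l * c) = qc * (c * l))
    (h1 : Commute pc a) (h2 : Commute pc b) (h3 : Commute qc a) (h4 : Commute qc b) :
    pc * (a * b * l * c) = qc * (a * b * c * l) := by
  calc pc * (a * b * l * c) = (pc * (a * b)) * (l * c) := by noncomm_ring
    _ = a * b * (pc * (l * c)) := by rw [(h1.mul_right h2).eq]; noncomm_ring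
    _ = (a * b * qc) * (c * l) := by rw [hc]; noncomm_ring
    _ = qc * (a * b * c * l) := by rw [← (h3.mul_right h4).eq]; noncomm_ring

theorem move_two (hb : pb * (l * b) = qb * (b * l)) (hc : pc * (l * c) = qc * (c * l))
    (h1 : Commute pc a) (h2 : Commute pc b) (h3 : Commute qc a) (h4 : Commute qc b)
    (h5 : Commute pb a) (h6 : Commute qb a) (h7 : Commute pc qb) :
    pc * (pb * (a * l * b * c)) = qb * (qc * (a * b * c * l)) := by
  have e : pb * (a * l * b * c) = qb * (a * b * l * c) := by
    calc pb * (a * l * b * c) = (pb * a) * (l * b) * c := by noncomm_ring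
      _ = a * (pb * (l * b)) * c := by rw [h5.eq]; noncomm_ring
      _ = (a * qb) * b * l * c := by rw [hb]; noncomm_ring
      _ = qb * (a * b * l * c) := by rw [← h6.eq]; noncomm_ring
  rw [e, ← mul_assoc, h7.eq, mul_assoc, move_one hc h1 h2 h3 h4]

theorem move_three (ha : pa * (l * a) = qa * (a * l))
    (hb : pb * (l * b) = qb * (b * l)) (hc : pc * (l * c) = qc * (c * l))
    (h1 : Commute pc a) (h2 : Commute pc b) (h3 : Commute qc a) (h4 : Commute qc b)
    (h5 : Commute pb a) (h6 : Commute qb a) (h7 : Commute pc qb)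
    (h8 : Commute pb qa) (h9 : Commute pc qa) :
    pc * (pb * (pa * (l * a * b * c))) = qa * (qb * (qc * (a * b * c * l))) := by
  have e : pa * (l * a * b * c) = qa * (a * l * b * c) := by
    calc pa * (l * a * b * c) = (pa * (l * a)) * b * c := by noncomm_ring
      _ = qa * (a * l * b * c) := by rw [ha]; noncomm_ring
  calc pc * (pb * (pa * (l * a * b * c))) = (pc * pb * qa) * (a * l * b * c) := by
        rw [e]; noncomm_ring
    _ = qa * (pc * (pb * (a * l * b * c))) := by rw [(h9.mul_left h8).eq]; noncomm_ring
    _ = _ := by rw [move_two hb hc h1 h2 h3 h4 h5 h6 h7]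

/-- Clearing the denominators of the word in the normalised letters `κt s`. -/
theorem clear_tilde {ta tb tc : A} (ha : pa * ta = a) (hb : pb * tb = b) (hc : pc * tc = c)
    (h1 : Commute pc ta) (h2 : Commute pc tb) (h3 : Commute pb ta) :
    pa * (pb * (pc * (ta * tb * tc * l))) = a * b * c * l := by
  have e1 : pc * (ta * tb * tc * l) = ta * tb * c * l := by
    calc pc * (ta * tb * tc * l) = (pc * (ta * tb)) * tc * l := by noncomm_ring
      _ = ta * tb * (pc * tc) * l := by rw [(h1.mul_right h2).eq]; noncomm_ring
      _ = _ := by rw [hc]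
  have e2 : pb * (ta * tb * c * l) = ta * b * c * l := by
    calc pb * (ta * tb * c * l) = (pb * ta) * tb * c * l := by noncomm_ring
      _ = ta * (pb * tb) * c * l := by rw [h3.eq]; noncomm_ring
      _ = _ := by rw [hb]
  rw [e1, e2, ← ha]
  noncomm_ring

end Words

section Module

variable {B M : Type*} [CommRing B] [AddCommGroup M] [Module B M]

/-- The part of the identity coming from one permutation, with cleared denominators: `W` is the word
`κ a * κ b * κ c * lam`, `L1, L2, L3` have `lam` moved one, two, three places to the left, and `T` is
the word in which each `κ s` is replaced by `κt s`. -/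
theorem smul_word {x y z t K : B} {W L1 L2 L3 T : M}
    (h1 : (z + t) • L1 = (z - t) • W)
    (h2 : (z + t) • (y + t) • L2 = (y - t) • (z - t) • W)
    (h3 : (z + t) • (y + t) • (x + t) • L3 = (x - t) • (y - t) • (z - t) • W)
    (hT : (x + t) • (y + t) • (z + t) • T = W) :
    ((x + t) * (y + t) * (z + t)) • (W - 3 • L1 + 3 • L2 - L3 - K • T)
      = ((x + t) * (y + t) * (z + t) - 3 * ((x + t) * (y + t) * (z - t))
          + 3 * ((x + t) * (y - t) * (z - t)) - (x - t) * (y - t) * (z - t) - K) • W := by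
  linear_combination (norm := module) (-3 * ((x + t) * (y + t))) • h1 + (3 * (x + t)) • h2 - h3 - K • hT

/-- `W a b c` is the word `κ a * κ b * κ c * lam`, and `R a b c` the contribution of one permutation
to the difference of the two sides, regrouped by the order of the letters (see `smul_word`). The
hypotheses `hl` and `hr` exchange the first two and the last two letters, and `hp`, `hd` say that the
denominators act injectively. -/
theorem smul_key {x : Fin 3 → B} {n t : B} {W R : Fin 3 → Fin 3 → Fin 3 → M}
    (hR : ∀ a b c, a ≠ b → a ≠ c → b ≠ c →
      ((x a + t) * (x b + t) * (x c + t)) • R a b c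
      = ((x a + t) * (x b + t) * (x c + t) - 3 * ((x a + t) * (x b + t) * (x c - t))
          + 3 * ((x a + t) * (x b - t) * (x c - t)) - (x a - t) * (x b - t) * (x c - t)
          - 2 * t * (2 * t + n) * (2 * t + 2 * n)) • W a b c)
    (hl : ∀ a b c, a ≠ b → a ≠ c → b ≠ c →
      (x a - x b - n) • W a b c = (x a - x b + n) • W b a c)
    (hr : ∀ a b c, a ≠ b → a ≠ c → b ≠ c →
      (x b - x c - n) • W a b c = (x b - x c + n) • W a c b)
    (hp : ∀ s (v : M), (x s + t) • v = 0 → v = 0)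
    (hd : ∀ s r, s ≠ r → ∀ v : M, (x s - x r + n) • v = 0 → v = 0) :
    R 0 1 2 + R 1 0 2 + R 0 2 1 + R 1 2 0 + R 2 0 1 + R 2 1 0 = 0 := by
  have d01 : (0 : Fin 3) ≠ 1 := by decide
  have d02 : (0 : Fin 3) ≠ 2 := by decide
  have d12 : (1 : Fin 3) ≠ 2 := by decide
  -- it suffices to prove the identity after multiplying it by all the denominators
  refine hp 0 _ (hp 1 _ (hp 2 _ (hd 0 1 d01 _ (hd 0 2 d02 _ (hd 1 2 d12 _ ?_)))))
  have r1 := hR 0 1 2 d01 d02 d12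
  have r2 := hR 1 0 2 d01.symm d12 d02
  have r3 := hR 0 2 1 d02 d01 d12.symm
  have r4 := hR 1 2 0 d12 d01.symm d02.symm
  have r5 := hR 2 0 1 d02.symm d12.symm d01
  have r6 := hR 2 1 0 d12.symm d02.symm d01.symm
  -- every word is reduced to `W 0 1 2`, with denominators `x s - x r + n`, `s < r`
  have w2 := hl 0 1 2 d01 d02 d12
  have w3 := hr 0 1 2 d01 d02 d12
  have w4 := hr 1 0 2 d01.symm d12 d02
  have w5 := hl 0 2 1 d02 d01 d12.symm
  have w6 := hl 1 2 0 d12 d01.symm d02.symm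
  generalize x 0 = x0, x 1 = x1, x 2 = x2 at *
  generalize W 0 1 2 = W1, W 1 0 2 = W2, W 0 2 1 = W3, W 1 2 0 = W4, W 2 0 1 = W5,
    W 2 1 0 = W6 at *
  have v2 : ((x0 - x1 + n) * (x0 - x2 + n) * (x1 - x2 + n)) • W2
      = ((x0 - x1 - n) * (x0 - x2 + n) * (x1 - x2 + n)) • W1 := by
    linear_combination (norm := module) -((x0 - x2 + n) * (x1 - x2 + n)) • w2
  have v3 : ((x0 - x1 + n) * (x0 - x2 + n) * (x1 - x2 + n)) • W3
      = ((x0 - x1 + n) * (x0 - x2 + n) * (x1 - x2 - n)) • W1 := by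
    linear_combination (norm := module) -((x0 - x1 + n) * (x0 - x2 + n)) • w3
  have v4 : ((x0 - x1 + n) * (x0 - x2 + n) * (x1 - x2 + n)) • W4
      = ((x0 - x1 - n) * (x0 - x2 - n) * (x1 - x2 + n)) • W1 := by
    linear_combination (norm := module) -((x0 - x1 + n) * (x1 - x2 + n)) • w4
      - ((x0 - x2 - n) * (x1 - x2 + n)) • w2
  have v5 : ((x0 - x1 + n) * (x0 - x2 + n) * (x1 - x2 + n)) • W5
      = ((x0 - x1 + n) * (x0 - x2 - n) * (x1 - x2 - n)) • W1 := by
    linear_combination (norm := module) -((x0 - x1 + n) * (x1 - x2 + n)) • w5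
      - ((x0 - x1 + n) * (x0 - x2 - n)) • w3
  have v6 : ((x0 - x1 + n) * (x0 - x2 + n) * (x1 - x2 + n)) • W6
      = ((x0 - x1 - n) * (x0 - x2 - n) * (x1 - x2 - n)) • W1 := by
    linear_combination (norm := module) -((x0 - x1 + n) * (x0 - x2 + n)) • w6
      - ((x0 - x1 + n) * (x1 - x2 - n)) • w4 - ((x0 - x2 - n) * (x1 - x2 - n)) • w2
  linear_combination (norm := module) ((x0 - x1 + n) * (x0 - x2 + n) * (x1 - x2 + n)) • (r1 + r2 + r3 + r4 + r5 + r6)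
    + ((x1 + t) * (x0 + t) * (x2 + t) - 3 * ((x1 + t) * (x0 + t) * (x2 - t))
        + 3 * ((x1 + t) * (x0 - t) * (x2 - t)) - (x1 - t) * (x0 - t) * (x2 - t)
        - 2 * t * (2 * t + n) * (2 * t + 2 * n)) • v2
    + ((x0 + t) * (x2 + t) * (x1 + t) - 3 * ((x0 + t) * (x2 + t) * (x1 - t))
        + 3 * ((x0 + t) * (x2 - t) * (x1 - t)) - (x0 - t) * (x2 - t) * (x1 - t)
        - 2 * t * (2 * t + n) * (2 * t + 2 * n)) • v3
    + ((x1 + t) * (x2 + t) * (x0 + t) - 3 * ((x1 + t) * (x2 + t) * (x0 - t))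
        + 3 * ((x1 + t) * (x2 - t) * (x0 - t)) - (x1 - t) * (x2 - t) * (x0 - t)
        - 2 * t * (2 * t + n) * (2 * t + 2 * n)) • v4
    + ((x2 + t) * (x0 + t) * (x1 + t) - 3 * ((x2 + t) * (x0 + t) * (x1 - t))
        + 3 * ((x2 + t) * (x0 - t) * (x1 - t)) - (x2 - t) * (x0 - t) * (x1 - t)
        - 2 * t * (2 * t + n) * (2 * t + 2 * n)) • v5
    + ((x2 + t) * (x1 + t) * (x0 + t) - 3 * ((x2 + t) * (x1 + t) * (x0 - t))
        + 3 * ((x2 + t) * (x1 - t) * (x0 - t)) - (x2 - t) * (x1 - t) * (x0 - t)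
        - 2 * t * (2 * t + n) * (2 * t + 2 * n)) • v6

end Module

open scoped IsMulCommutative in
/-- Commuting elements of an algebra, together with the scalars, lie in the image of a commutative
ring. -/
theorem exists_commRing.{u} {A : Type u} [Ring A] [Algebra ℂ A] {S : Set A}
    (hS : ∀ a ∈ S, ∀ b ∈ S, a * b = b * a) :
    ∃ (B : Type u) (_ : CommRing B) (φ : B →+* A),
      (∀ a ∈ S, ∃ b, φ b = a) ∧ ∀ z : ℂ, ∃ b, φ b = algebraMap ℂ A z := by
  have := Algebra.isMulCommutative_adjoin ℂ hS
  exact ⟨Algebra.adjoin ℂ S, inferInstance, (Algebra.adjoin ℂ S).val.toRingHom,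
    fun a ha => ⟨⟨a, Algebra.subset_adjoin ha⟩, rfl⟩,
    fun z => ⟨⟨algebraMap ℂ A z, Subalgebra.algebraMap_mem _ z⟩, rfl⟩⟩


/-- The `n = 3` case of the combinatorial lemma:
`Σ_{σ∈S₃} [κ_{σ1},[κ_{σ2},[κ_{σ3},lam]]] = 2θ(2θ+η)(2θ+2η)·(Σ_{σ∈S₃} κ̃_{σ1}κ̃_{σ2}κ̃_{σ3})·lam`
with `κ̃ₛ = (γₛ - g + θ)⁻¹ κₛ`. -/
theorem combinatorial_lemma_n3 (A : Type*) [Ring A] [Algebra ℂ A] (η θ : ℂ)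
    (g : A) (γ κ : Fin 3 → A) (lam : A)
    (hγγ : ∀ s t, γ s * γ t = γ t * γ s) (hgγ : ∀ s, g * γ s = γ s * g)
    (hκγ : ∀ s, κ s * γ s - γ s * κ s = -(algebraMap ℂ A η * κ s))
    (hκγ' : ∀ s t, s ≠ t → κ s * γ t = γ t * κ s)
    (hκg : ∀ s, κ s * g = g * κ s)
    (hlγ : ∀ s, lam * γ s = γ s * lam)
    (hbraid : ∀ s t, s ≠ t →
      (γ s - γ t - algebraMap ℂ A η) * (κ s * κ t)
        = (γ s - γ t + algebraMap ℂ A η) * (κ t * κ s))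
    (hκl : ∀ s, (γ s - g - algebraMap ℂ A θ) * (κ s * lam)
      = (γ s - g + algebraMap ℂ A θ) * (lam * κ s))
    (hinv : ∀ p : ℤ, |p| ≤ 3 → ∀ s t, s ≠ t →
      IsUnit (γ s - γ t + algebraMap ℂ A ((p : ℂ) * η)) ∧
      IsUnit (γ s - g + algebraMap ℂ A (θ + (p : ℂ) * η)) ∧
      IsUnit (γ s - g + algebraMap ℂ A (-θ + (p : ℂ) * η)))
    (κt : Fin 3 → A)
    (hκt : ∀ s, κt s = Ring.inverse (γ s - g + algebraMap ℂ A θ) * κ s) :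
    ∑ σ : Equiv.Perm (Fin 3),
        cbrk (κ (σ 0)) (cbrk (κ (σ 1)) (cbrk (κ (σ 2)) lam))
      = algebraMap ℂ A (2 * θ * (2 * θ + η) * (2 * θ + 2 * η)) *
          (∑ σ : Equiv.Perm (Fin 3), κt (σ 0) * κt (σ 1) * κt (σ 2)) * lam := by
  obtain ⟨B, _, φ, hφ, hφC⟩ := exists_commRing
    (S := Set.range fun s => γ s - g) (by
      rintro _ ⟨s, rfl⟩ _ ⟨r, rfl⟩
      have h := hγγ s r
      have h1 := hgγ s
      have h2 := hgγ r
      simp only [sub_mul, mul_sub, h, h1, h2]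
      abel)
  choose x hx using fun s => hφ _ ⟨s, rfl⟩
  -- `x`, `n`, `t` are preimages in `B` of `γ - g`, `η`, `θ`
  obtain ⟨n, hn⟩ := hφC η
  obtain ⟨t, ht⟩ := hφC θ
  simp only at hx
  have hK : φ (2 * t * (2 * t + n) * (2 * t + 2 * n))
      = algebraMap ℂ A (2 * θ * (2 * θ + η) * (2 * θ + 2 * η)) := by
    simp only [map_mul, map_add, map_ofNat, hn, ht]
  have hp : ∀ s, φ (x s + t) = γ s - g + algebraMap ℂ A θ := fun s => by simp [hx, ht]
  have hq : ∀ s, φ (x s - t) = γ s - g - algebraMap ℂ A θ := fun s => by simp [hx, ht]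
  have hcB : ∀ b b' : B, Commute (φ b) (φ b') := fun b b' => (Commute.all b b').map φ
  have hcx : ∀ s r, s ≠ r → Commute (γ s - g) (κ r) := fun s r h =>
    Commute.sub_left (hκγ' r s h.symm).symm (hκg r).symm
  have hcp : ∀ s r, s ≠ r → Commute (φ (x s + t)) (κ r) := fun s r h => by
    rw [hp]; exact (hcx s r h).add_left (Algebra.commute_algebraMap_left _ _)
  have hcq : ∀ s r, s ≠ r → Commute (φ (x s - t)) (κ r) := fun s r h => by
    rw [hq]; exact (hcx s r h).sub_left (Algebra.commute_algebraMap_left _ _)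
  have hcd : ∀ s r u, s ≠ u → r ≠ u → ∀ z : ℂ,
      Commute (γ s - γ r + algebraMap ℂ A z) (κ u) := fun s r u h h' z =>
    (Commute.sub_left (hκγ' u s h.symm).symm (hκγ' u r h'.symm).symm).add_left
      (Algebra.commute_algebraMap_left _ _)
  have hup : ∀ s, IsUnit (φ (x s + t)) := fun s => by
    obtain ⟨r, hr⟩ := exists_ne s
    simpa [hp] using (hinv 0 (by norm_num) s r hr.symm).2.1
  have hud : ∀ s r, s ≠ r → IsUnit (φ (x s - x r + n)) := fun s r h => by
    have := (hinv 1 (by norm_num) s r h).1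
    simpa [hx, hn] using this
  have hl : ∀ s, φ (x s + t) * (lam * κ s) = φ (x s - t) * (κ s * lam) := fun s => by
    rw [hp, hq, hκl]
  have hT : ∀ s, φ (x s + t) * κt s = κ s := fun s => by
    rw [hκt, ← hp, Ring.mul_inverse_cancel_left _ _ (hup s)]
  have hcT : ∀ s r, s ≠ r → Commute (φ (x s + t)) (κt r) := fun s r h => by
    -- `φ (x r + t)` is a unit that turns `κt r` into `κ r`, so the claim reduces to `hcp`
    refine (hup r).mul_left_cancel ?_
    rw [← mul_assoc, (hcB (x r + t) (x s + t)).eq, mul_assoc, hT, ← mul_assoc, hT, (hcp s r h).eq]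
  -- the scalar `b` acts on `A` as left multiplication by `φ b`
  let _ : Module B A := Module.compHom A φ
  have hsm : ∀ (b : B) (v : A), b • v = φ b * v := fun _ _ => rfl
  have key := smul_key (B := B) (M := A) (x := x) (n := n) (t := t)
    (W := fun a b c => κ a * κ b * κ c * lam)
    (R := fun a b c => κ a * κ b * κ c * lam - 3 • (κ a * κ b * lam * κ c)
      + 3 • (κ a * lam * κ b * κ c) - lam * κ a * κ b * κ c
      - (2 * t * (2 * t + n) * (2 * t + 2 * n)) • (κt a * κt b * κt c * lam))
    (fun a b c hab hac hbc => smul_word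
      (by
        simp only [hsm]
        exact move_one (hl c) (hcp _ _ hac.symm) (hcp _ _ hbc.symm) (hcq _ _ hac.symm)
          (hcq _ _ hbc.symm))
      (by
        simp only [hsm]
        exact move_two (hl b) (hl c) (hcp _ _ hac.symm) (hcp _ _ hbc.symm) (hcq _ _ hac.symm)
          (hcq _ _ hbc.symm) (hcp _ _ hab.symm) (hcq _ _ hab.symm) (hcB _ _))
      (by
        simp only [hsm]
        exact move_three (hl a) (hl b) (hl c) (hcp _ _ hac.symm) (hcp _ _ hbc.symm)
          (hcq _ _ hac.symm) (hcq _ _ hbc.symm) (hcp _ _ hab.symm) (hcq _ _ hab.symm)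
          (hcB _ _) (hcB _ _) (hcB _ _))
      (by
        simp only [hsm]
        exact clear_tilde (hT a) (hT b) (hT c) (hcT _ _ hac.symm) (hcT _ _ hbc.symm)
          (hcT _ _ hab.symm)))
    (fun a b c hab hac hbc => by
      have h := congrArg (· * (κ c * lam)) (hbraid a b hab)
      simp only [hsm, map_sub, map_add, hx, hn, sub_sub_sub_cancel_right]
      simpa only [mul_assoc] using h)
    (fun a b c hab hac hbc => by
      have h := congrArg (κ a * · * lam) (hbraid b c hbc)
      have h1 := (hcd b c a hab.symm hac.symm (-η)).eq
      have h2 := (hcd b c a hab.symm hac.symm η).eq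
      rw [map_neg, ← sub_eq_add_neg] at h1
      simp only [hsm, map_sub, map_add, hx, hn, sub_sub_sub_cancel_right]
      simp only [← mul_assoc, ← h1, ← h2] at h ⊢
      exact h)
    (fun s v h => (hup s).mul_right_eq_zero.mp h)
    (fun s r hsr v h => (hud s r hsr).mul_right_eq_zero.mp h)
  rw [sum_perm_fin_three (fun a b c => cbrk (κ a) (cbrk (κ b) (cbrk (κ c) lam))),
    sum_perm_fin_three (fun a b c => κt a * κt b * κt c), ← sub_eq_zero, ← key]
  simp only [hsm, hK, cbrk]
  noncomm_ring
end

section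
/- Let A be an associative unital ℂ-algebra, η, θ ∈ ℂ, and g, γ_1, γ_2, γ_3, γ_4, κ_1, κ_2, κ_3, κ_4, λ ∈ A such that: (i) g, γ_1, γ_2, γ_3, γ_4 pairwise commute; (ii) κ_s γ_s − γ_s κ_s = −η κ_s for each s, and κ_s commutes with γ_t for s ≠ t and with g; (iii) λ commutes with each γ_s; (iv) (γ_s − γ_t − η)κ_sκ_t = (γ_s − γ_t + η)κ_tκ_s for all s ≠ t; (v) (γ_s − g − θ)κ_sλ = (γ_s − g + θ)λκ_s for each s; (vi) for every integer p with |p| ≤ 4 and all s ≠ t, the elements γ_s − γ_t + pη, γ_s − g + θ + pη and γ_s − g − θ + pη are invertible in A. Then Σ_{σ∈S_4} [κ_{σ(1)},[κ_{σ(2)},[κ_{σ(3)},[κ_{σ(4)},λ]]]] = 2θ(2θ+η)(2θ+2η)(2θ+3η) · (Σ_{σ∈S_4} κ̃_{σ(1)}κ̃_{σ(2)}κ̃_{σ(3)}κ̃_{σ(4)}) · λ, where κ̃_s := (γ_s − g + θ)^{−1} κ_s. -/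
/-! ### Sums over the symmetric group -/

/-- A sum over `S₄` written out, grouped by the first value and then in lexicographic order. -/
theorem sum_perm_fin_four {M : Type*} [AddCommMonoid M]
    (f : Fin 4 → Fin 4 → Fin 4 → Fin 4 → M) :
    ∑ σ : Equiv.Perm (Fin 4), f (σ 0) (σ 1) (σ 2) (σ 3) =
      (f 0 1 2 3 + f 0 1 3 2 + f 0 2 1 3 + f 0 2 3 1 + f 0 3 1 2 + f 0 3 2 1) +
      (f 1 0 2 3 + f 1 0 3 2 + f 1 2 0 3 + f 1 2 3 0 + f 1 3 0 2 + f 1 3 2 0) +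
      (f 2 0 1 3 + f 2 0 3 1 + f 2 1 0 3 + f 2 1 3 0 + f 2 3 0 1 + f 2 3 1 0) +
      (f 3 0 1 2 + f 3 0 2 1 + f 3 1 0 2 + f 3 1 2 0 + f 3 2 0 1 + f 3 2 1 0) := by
  have key (p : Fin 4) (e : Equiv.Perm (Fin 3)) :
      f (Equiv.Perm.decomposeFin.symm (p, e) 0) (Equiv.Perm.decomposeFin.symm (p, e) 1)
        (Equiv.Perm.decomposeFin.symm (p, e) 2) (Equiv.Perm.decomposeFin.symm (p, e) 3) =
      f p (Equiv.swap 0 p (e 0).succ) (Equiv.swap 0 p (e 1).succ) (Equiv.swap 0 p (e 2).succ) := by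
    have h1 := Equiv.Perm.decomposeFin_symm_apply_succ e p 0
    have h2 := Equiv.Perm.decomposeFin_symm_apply_succ e p 1
    have h3 := Equiv.Perm.decomposeFin_symm_apply_succ e p 2
    simp only [Fin.succ_zero_eq_one, Fin.succ_one_eq_two, show Fin.succ (2 : Fin 3) = 3 from rfl]
      at h1 h2 h3
    rw [Equiv.Perm.decomposeFin_symm_apply_zero, h1, h2, h3]
  have key3 (h : Fin 3 → Fin 3 → Fin 3 → M) : ∑ e : Equiv.Perm (Fin 3), h (e 0) (e 1) (e 2) =
      h 0 1 2 + h 0 2 1 + h 1 0 2 + h 1 2 0 + h 2 0 1 + h 2 1 0 := by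
    have : (Finset.univ : Finset (Equiv.Perm (Fin 3))) =
      {1, Equiv.swap 1 2, Equiv.swap 0 1, Equiv.swap 0 1 * Equiv.swap 1 2,
        Equiv.swap 1 2 * Equiv.swap 0 1, Equiv.swap 0 2} := by decide
    rw [this]
    repeat rw [Finset.sum_insert (by decide)]
    rw [Finset.sum_singleton]
    simp only [← add_assoc]
    rfl
  -- A permutation of `Fin 4` is the choice of the image `p` of `0` and a permutation of `Fin 3`.
  rw [← Equiv.Perm.decomposeFin.symm.sum_comp, Fintype.sum_prod_type]
  simp only [key]
  rw [Fin.sum_univ_four]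
  have block (p : Fin 4) := key3 fun i j k =>
    f p (Equiv.swap 0 p i.succ) (Equiv.swap 0 p j.succ) (Equiv.swap 0 p k.succ)
  rw [block, block, block, block]
  have s1 : (0 : Fin 3).succ = (1 : Fin 4) := rfl
  have s2 : (1 : Fin 3).succ = (2 : Fin 4) := rfl
  have s3 : (2 : Fin 3).succ = (3 : Fin 4) := rfl
  simp only [s1, s2, s3, Equiv.swap_apply_def, Fin.reduceEq, if_true, if_false]
  abel

section Words

variable {A ι : Type*} [Ring A]

theorem cbrk_add (p q r : A) : cbrk p (q + r) = cbrk p q + cbrk p r := by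
  simp only [cbrk]
  noncomm_ring

/-! ### Symmetrised products and nested commutators -/

/-- Sum of the products of `κ a, κ b` over both orders. -/
def symm₂ (κ : ι → A) (a b : ι) : A := κ a * κ b + κ b * κ a

/-- Sum of the products of `κ a, κ b, κ c` over all six orders, grouped by the first factor. -/
def symm₃ (κ : ι → A) (a b c : ι) : A :=
  κ a * symm₂ κ b c + κ b * symm₂ κ a c + κ c * symm₂ κ a b

/-- Sum of the products of four letters over all 24 orders, grouped by the first factor. -/
def symm₄ (κ : ι → A) (a b c d : ι) : A :=
  κ a * symm₃ κ b c d + κ b * symm₃ κ a c d + κ c * symm₃ κ a b d + κ d * symm₃ κ a b c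

/-- Sum of the nested commutators `[κ a, [κ b, l]]` over both orders of `a, b`. -/
def nest₂ (κ : ι → A) (l : A) (a b : ι) : A :=
  cbrk (κ a) (cbrk (κ b) l) + cbrk (κ b) (cbrk (κ a) l)

/-- Sum of the threefold nested commutators over all orders, grouped by the outermost letter. -/
def nest₃ (κ : ι → A) (l : A) (a b c : ι) : A :=
  cbrk (κ a) (nest₂ κ l b c) + cbrk (κ b) (nest₂ κ l a c) + cbrk (κ c) (nest₂ κ l a b)

/-- Sum of the fourfold nested commutators over all orders, grouped by the outermost letter. -/
def nest₄ (κ : ι → A) (l : A) (a b c d : ι) : A :=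
  cbrk (κ a) (nest₃ κ l b c d) + cbrk (κ b) (nest₃ κ l a c d) + cbrk (κ c) (nest₃ κ l a b d)
    + cbrk (κ d) (nest₃ κ l a b c)

/-- The relations in `A` on which the lemma rests, in terms of `x s = γ s - g`, and of the central
elements `e`, `h` given by `η`, `θ`. -/
structure ExchangeData (x κ : ι → A) (e h l : A) : Prop where
  comm_e : ∀ a, Commute e a
  comm_h : ∀ a, Commute h a
  comm_x : ∀ s t, Commute (x s) (x t)
  comm_κx : ∀ s t, s ≠ t → Commute (κ s) (x t)
  braid : ∀ s t, s ≠ t →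
    (x s - x t - e) * (κ s * κ t) = (x s - x t + e) * (κ t * κ s)
  cross : ∀ s, (x s - h) * (κ s * l) = (x s + h) * (l * κ s)

/-- The factor `x s + h` turns the letter `κt s` into `κ s`, while `w` passes through `κt s`. -/
theorem move_letter {x κ : ι → A} {h : A} {κt : ι → A} (hκt : ∀ s, (x s + h) * κt s = κ s)
    (s : ι) {w E E' : A} (hw : Commute w (κt s)) (hwX : Commute w (x s + h)) (hE : w * E = E') :
    w * (x s + h) * (κt s * E) = κ s * E' := by
  rw [hwX.eq, mul_assoc, ← mul_assoc w, hw.eq, mul_assoc (κt s), hE, ← mul_assoc, hκt]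

namespace ExchangeData

variable {x κ : ι → A} {e h l : A} (D : ExchangeData x κ e h l)
include D

/-! ### Telescoping over neighbouring letters -/

/-- The exchange relation, solved for the differences `x a - x b`, inside a word `p · κ a κ b · q`
whose prefix `p` commutes with `x a` and `x b`. -/
theorem pair {a b : ι} (hab : a ≠ b) (p q : A) (hpa : Commute p (x a)) (hpb : Commute p (x b)) :
    (x a - x b) * (p * (κ a * (κ b * q))) - (x a - x b) * (p * (κ b * (κ a * q))) =
      e * (p * (κ a * (κ b * q))) + e * (p * (κ b * (κ a * q))) := by
  have hp : (x a - x b) * p = p * (x a - x b) := (hpa.sub_right hpb).symm.eq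
  have h0 : p * ((x a - x b - e) * (κ a * κ b)) * q = p * ((x a - x b + e) * (κ b * κ a)) * q := by
    rw [D.braid a b hab]
  have he : e * p = p * e := D.comm_e p
  simp only [← mul_assoc, hp, he] at h0 ⊢
  linear_combination (norm := noncomm_ring) h0

theorem telescope₂ {a b : ι} (hab : a ≠ b) :
    x a * (κ a * κ b - κ b * κ a) + x b * (κ b * κ a - κ a * κ b) = e * symm₂ κ a b := by
  have h1 := D.pair hab 1 1 (.one_left _) (.one_left _)
  simp only [one_mul, mul_one] at h1
  unfold symm₂
  linear_combination (norm := noncomm_ring) h1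

/-- In the word `κ a κ b κ c` the coefficient `x a - x c` is the telescoping sum of the differences of
neighbours, and each such difference contributes `e` after pairing words that differ by the swap
of these neighbours. -/
theorem telescope₃ {a b c : ι} (hab : a ≠ b) (hac : a ≠ c) (hbc : b ≠ c) :
    x a * (κ a * symm₂ κ b c - symm₂ κ b c * κ a)
      + x b * (κ b * symm₂ κ a c - symm₂ κ a c * κ b)
      + x c * (κ c * symm₂ κ a b - symm₂ κ a b * κ c) = 2 * e * symm₃ κ a b c := by
  have l1 := D.pair hab 1 (κ c) (.one_left _) (.one_left _)
  have l2 := D.pair hac 1 (κ b) (.one_left _) (.one_left _)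
  have l3 := D.pair hbc 1 (κ a) (.one_left _) (.one_left _)
  have r1 := D.pair hab (κ c) 1 (D.comm_κx _ _ hac.symm) (D.comm_κx _ _ hbc.symm)
  have r2 := D.pair hac (κ b) 1 (D.comm_κx _ _ hab.symm) (D.comm_κx _ _ hbc)
  have r3 := D.pair hbc (κ a) 1 (D.comm_κx _ _ hab) (D.comm_κx _ _ hac)
  simp only [one_mul, mul_one] at l1 l2 l3 r1 r2 r3
  unfold symm₃ symm₂
  linear_combination (norm := noncomm_ring) l1 + l2 + l3 + r1 + r2 + r3

/-- `pair` summed over all words in which `a` and `b` are neighbours: the block of `a, b` stands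
first, in the middle, or last, and `c, d` fill the other places in both orders. -/
theorem pair₄ {a b c d : ι} (hab : a ≠ b) (hac : a ≠ c) (had : a ≠ d) (hbc : b ≠ c)
    (hbd : b ≠ d) :
    (x a - x b) * (κ a * κ b * symm₂ κ c d + κ c * (κ a * κ b) * κ d + κ d * (κ a * κ b) * κ c
        + symm₂ κ c d * (κ a * κ b))
      - (x a - x b) * (κ b * κ a * symm₂ κ c d + κ c * (κ b * κ a) * κ d
        + κ d * (κ b * κ a) * κ c + symm₂ κ c d * (κ b * κ a)) =
    e * (κ a * κ b * symm₂ κ c d + κ c * (κ a * κ b) * κ d + κ d * (κ a * κ b) * κ c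
        + symm₂ κ c d * (κ a * κ b))
      + e * (κ b * κ a * symm₂ κ c d + κ c * (κ b * κ a) * κ d
        + κ d * (κ b * κ a) * κ c + symm₂ κ c d * (κ b * κ a)) := by
  have ca := D.comm_κx c a hac.symm
  have cb := D.comm_κx c b hbc.symm
  have da := D.comm_κx d a had.symm
  have db := D.comm_κx d b hbd.symm
  have h1 := D.pair hab 1 (symm₂ κ c d) (.one_left _) (.one_left _)
  have h2 := D.pair hab (κ c) (κ d) ca cb
  have h3 := D.pair hab (κ d) (κ c) da db
  have h4 := D.pair hab (symm₂ κ c d) 1 ((ca.mul_left da).add_left (da.mul_left ca))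
    ((cb.mul_left db).add_left (db.mul_left cb))
  simp only [one_mul, mul_one] at h1 h2 h3 h4
  linear_combination (norm := noncomm_ring) h1 + h2 + h3 + h4

/-- The four-letter analogue of `telescope₃`; there are three pairs of neighbouring places, hence the
factor `3`. -/
theorem telescope₄ {a b c d : ι} (hab : a ≠ b) (hac : a ≠ c) (had : a ≠ d) (hbc : b ≠ c)
    (hbd : b ≠ d) (hcd : c ≠ d) :
    x a * (κ a * symm₃ κ b c d - symm₃ κ b c d * κ a)
      + x b * (κ b * symm₃ κ a c d - symm₃ κ a c d * κ b)
      + x c * (κ c * symm₃ κ a b d - symm₃ κ a b d * κ c)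
      + x d * (κ d * symm₃ κ a b c - symm₃ κ a b c * κ d) = 3 * e * symm₄ κ a b c d := by
  have h1 := D.pair₄ hab hac had hbc hbd
  have h2 := D.pair₄ hac hab had hbc.symm hcd
  have h3 := D.pair₄ had hab hac hbd.symm hcd.symm
  have h4 := D.pair₄ hbc hab.symm hbd hac.symm hcd
  have h5 := D.pair₄ hbd hab.symm hbc had.symm hcd.symm
  have h6 := D.pair₄ hcd hac.symm hbc.symm had.symm hbd.symm
  unfold symm₄ symm₃
  unfold symm₂ at *
  linear_combination (norm := noncomm_ring) h1 + h2 + h3 + h4 + h5 + h6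

/-! ### Induction on the number of letters -/

/-- The outermost commutator with `κ s`, with the denominator `w * (x s + h)` cleared. In the term
`y κ s` the letter `κ s` is moved to the left of `l`, which trades `x s + h` for `x s - h`. -/
theorem step (s : ι) {w y C E : A} (hwk : Commute w (κ s)) (hwx : Commute w (x s))
    (hEx : Commute E (x s)) (hC : ∀ a, Commute C a) (hy : w * y = C * (E * l)) :
    w * (x s + h) * cbrk (κ s) y =
      C * (((x s + h) * (κ s * E) - (x s - h) * (E * κ s)) * l) := by
  have hwX : w * (x s + h) = (x s + h) * w := (hwx.add_right (D.comm_h w).symm).eq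
  have hEX : (x s + h) * E = E * (x s + h) := (hEx.add_right (D.comm_h E).symm).eq.symm
  have hEX' : (x s - h) * E = E * (x s - h) := (hEx.sub_right (D.comm_h E).symm).eq.symm
  have e1 : (x s + h) * w * (κ s * y) = C * ((x s + h) * (κ s * E) * l) := by
    calc (x s + h) * w * (κ s * y) = (x s + h) * (w * κ s) * y := by noncomm_ring
      _ = (x s + h) * κ s * (w * y) := by rw [hwk.eq]; noncomm_ring
      _ = ((x s + h) * κ s) * C * (E * l) := by rw [hy]; noncomm_ring
      _ = _ := by rw [← (hC _).eq]; noncomm_ring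
  have e2 : (x s + h) * w * (y * κ s) = C * ((x s - h) * (E * κ s) * l) := by
    calc (x s + h) * w * (y * κ s) = (x s + h) * (w * y) * κ s := by noncomm_ring
      _ = (x s + h) * C * (E * l) * κ s := by rw [hy]; noncomm_ring
      _ = C * ((x s + h) * E * (l * κ s)) := by rw [← (hC _).eq]; noncomm_ring
      _ = C * (E * ((x s + h) * (l * κ s))) := by rw [hEX]; noncomm_ring
      _ = C * (E * (x s - h) * (κ s * l)) := by rw [← D.cross s]; noncomm_ring
      _ = _ := by rw [← hEX']; noncomm_ring
  rw [hwX, cbrk, mul_sub, e1, e2]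
  noncomm_ring

theorem comm_X (s t : ι) : Commute (x s + h) (x t + h) :=
  ((D.comm_x s t).add_right (D.comm_h _).symm).add_left (D.comm_h _)

theorem comm_Xx (s t : ι) : Commute (x s + h) (x t) :=
  (D.comm_x s t).add_left (D.comm_h _)

theorem comm_Xκ {s t : ι} (hst : s ≠ t) : Commute (x s + h) (κ t) :=
  (D.comm_κx t s hst.symm).symm.add_left (D.comm_h _)

theorem comm_symm₂ {a b s : ι} (ha : a ≠ s) (hb : b ≠ s) : Commute (symm₂ κ a b) (x s) :=
  have ca := D.comm_κx a s ha
  have cb := D.comm_κx b s hb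
  (ca.mul_left cb).add_left (cb.mul_left ca)

theorem comm_symm₃ {a b c s : ι} (ha : a ≠ s) (hb : b ≠ s) (hc : c ≠ s) :
    Commute (symm₃ κ a b c) (x s) :=
  (((D.comm_κx a s ha).mul_left (D.comm_symm₂ hb hc)).add_left
    ((D.comm_κx b s hb).mul_left (D.comm_symm₂ ha hc))).add_left
    ((D.comm_κx c s hc).mul_left (D.comm_symm₂ ha hb))

theorem rotate₃ (a b c : ι) :
    (x b + h) * (x c + h) * (x a + h) = (x a + h) * (x b + h) * (x c + h) := by
  rw [← ((D.comm_X a b).mul_right (D.comm_X a c)).eq, mul_assoc]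

theorem swap₃ (w : A) (b c : ι) : w * (x c + h) * (x b + h) = w * (x b + h) * (x c + h) := by
  rw [mul_assoc, (D.comm_X c b).eq, mul_assoc]

theorem rotate₄ (a b c d : ι) : (x b + h) * (x c + h) * (x d + h) * (x a + h) =
    (x a + h) * (x b + h) * (x c + h) * (x d + h) := by
  rw [D.swap₃, D.rotate₃]

theorem rotate₄' (a b c d : ι) : (x a + h) * (x c + h) * (x d + h) * (x b + h) =
    (x a + h) * (x b + h) * (x c + h) * (x d + h) := by
  rw [D.swap₃, D.swap₃ (x a + h) b c]

theorem central_two_h (a : A) : Commute (2 * h) a :=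
  (Commute.ofNat_left 2 a).mul_left (D.comm_h a)

theorem nested₁ (a : ι) : (x a + h) * cbrk (κ a) l = 2 * h * (κ a * l) := by
  have := D.step a (w := 1) (y := l) (C := 1) (E := 1) (.one_left _) (.one_left _) (.one_left _)
    .one_left (by simp)
  simp only [one_mul, mul_one] at this
  rw [this]
  noncomm_ring

theorem nested₂ {a b : ι} (hab : a ≠ b) :
    (x a + h) * (x b + h) * nest₂ κ l a b = 2 * h * (2 * h + e) * (symm₂ κ a b * l) := by
  have h1 := D.step a (D.comm_Xκ hab.symm) (D.comm_Xx _ _) (D.comm_κx b a hab.symm)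
    D.central_two_h (D.nested₁ b)
  have h2 := D.step b (D.comm_Xκ hab) (D.comm_Xx _ _) (D.comm_κx a b hab)
    D.central_two_h (D.nested₁ a)
  rw [(D.comm_X b a).eq] at h1
  have ht := congrArg (fun z => 2 * h * (z * l)) (D.telescope₂ hab)
  rw [nest₂, mul_add, h1, h2]
  unfold symm₂ at *
  linear_combination (norm := noncomm_ring) ht

theorem nested₃ {a b c : ι} (hab : a ≠ b) (hac : a ≠ c) (hbc : b ≠ c) :
    (x a + h) * (x b + h) * (x c + h) * nest₃ κ l a b c =
      2 * h * (2 * h + e) * (2 * h + 2 * e) * (symm₃ κ a b c * l) := by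
  have hC (z : A) : Commute (2 * h * (2 * h + e)) z :=
    (D.central_two_h z).mul_left ((D.central_two_h z).add_left (D.comm_e z))
  have h1 := D.step a ((D.comm_Xκ hab.symm).mul_left (D.comm_Xκ hac.symm))
    ((D.comm_Xx _ _).mul_left (D.comm_Xx _ _)) (D.comm_symm₂ hab.symm hac.symm) hC (D.nested₂ hbc)
  have h2 := D.step b ((D.comm_Xκ hab).mul_left (D.comm_Xκ hbc.symm))
    ((D.comm_Xx _ _).mul_left (D.comm_Xx _ _)) (D.comm_symm₂ hab hbc.symm) hC (D.nested₂ hac)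
  have h3 := D.step c ((D.comm_Xκ hac).mul_left (D.comm_Xκ hbc))
    ((D.comm_Xx _ _).mul_left (D.comm_Xx _ _)) (D.comm_symm₂ hac hbc) hC (D.nested₂ hab)
  rw [D.rotate₃ a b c] at h1
  rw [D.swap₃] at h2
  have hr : symm₂ κ b c * κ a + symm₂ κ a c * κ b + symm₂ κ a b * κ c = symm₃ κ a b c := by
    simp only [symm₃, symm₂]
    noncomm_ring
  have ht := D.telescope₃ hab hac hbc
  have hl : symm₃ κ a b c = κ a * symm₂ κ b c + κ b * symm₂ κ a c + κ c * symm₂ κ a b := rfl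
  rw [nest₃, mul_add, mul_add, h1, h2, h3, ← mul_add, ← mul_add, ← add_mul, ← add_mul,
    mul_assoc (2 * h * (2 * h + e)), ← mul_assoc (2 * h + 2 * e)]
  refine congrArg (2 * h * (2 * h + e) * ·) (congrArg (· * l) ?_)
  generalize symm₃ κ a b c = E at *
  linear_combination (norm := noncomm_ring) ht + h * hr - h * hl

/-- The two halves of `step` give `x s (κ s E - E κ s)`, summing to `3 e` times the symmetrised product
by `telescope₄`, and `h (κ s E + E κ s)`, summing to `2 h` times it. -/
theorem nested₄ {a b c d : ι} (hab : a ≠ b) (hac : a ≠ c) (had : a ≠ d) (hbc : b ≠ c)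
    (hbd : b ≠ d) (hcd : c ≠ d) :
    (x a + h) * (x b + h) * (x c + h) * (x d + h) * nest₄ κ l a b c d =
      2 * h * (2 * h + e) * (2 * h + 2 * e) * (2 * h + 3 * e) * (symm₄ κ a b c d * l) := by
  have hC (z : A) : Commute (2 * h * (2 * h + e) * (2 * h + 2 * e)) z :=
    ((D.central_two_h z).mul_left ((D.central_two_h z).add_left (D.comm_e z))).mul_left
      ((D.central_two_h z).add_left ((Commute.ofNat_left 2 z).mul_left (D.comm_e z)))
  have h1 := D.step a
    (((D.comm_Xκ hab.symm).mul_left (D.comm_Xκ hac.symm)).mul_left (D.comm_Xκ had.symm))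
    (((D.comm_Xx _ _).mul_left (D.comm_Xx _ _)).mul_left (D.comm_Xx _ _))
    (D.comm_symm₃ hab.symm hac.symm had.symm) hC (D.nested₃ hbc hbd hcd)
  have h2 := D.step b
    (((D.comm_Xκ hab).mul_left (D.comm_Xκ hbc.symm)).mul_left (D.comm_Xκ hbd.symm))
    (((D.comm_Xx _ _).mul_left (D.comm_Xx _ _)).mul_left (D.comm_Xx _ _))
    (D.comm_symm₃ hab hbc.symm hbd.symm) hC (D.nested₃ hac had hcd)
  have h3 := D.step c
    (((D.comm_Xκ hac).mul_left (D.comm_Xκ hbc)).mul_left (D.comm_Xκ hcd.symm))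
    (((D.comm_Xx _ _).mul_left (D.comm_Xx _ _)).mul_left (D.comm_Xx _ _))
    (D.comm_symm₃ hac hbc hcd.symm) hC (D.nested₃ hab had hbd)
  have h4 := D.step d
    (((D.comm_Xκ had).mul_left (D.comm_Xκ hbd)).mul_left (D.comm_Xκ hcd))
    (((D.comm_Xx _ _).mul_left (D.comm_Xx _ _)).mul_left (D.comm_Xx _ _))
    (D.comm_symm₃ had hbd hcd) hC (D.nested₃ hab hac hbc)
  rw [D.rotate₄ a b c d] at h1
  rw [D.rotate₄' a b c d] at h2
  rw [D.swap₃] at h3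
  have hr : symm₃ κ b c d * κ a + symm₃ κ a c d * κ b + symm₃ κ a b d * κ c
      + symm₃ κ a b c * κ d = symm₄ κ a b c d := by
    simp only [symm₄, symm₃, symm₂]
    noncomm_ring
  have ht := D.telescope₄ hab hac had hbc hbd hcd
  have hl : symm₄ κ a b c d = κ a * symm₃ κ b c d + κ b * symm₃ κ a c d + κ c * symm₃ κ a b d
      + κ d * symm₃ κ a b c := rfl
  rw [nest₄, mul_add, mul_add, mul_add, h1, h2, h3, h4, ← mul_add, ← mul_add, ← mul_add,
    ← add_mul, ← add_mul, ← add_mul, mul_assoc (2 * h * (2 * h + e) * (2 * h + 2 * e)),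
    ← mul_assoc (2 * h + 3 * e)]
  refine congrArg (2 * h * (2 * h + e) * (2 * h + 2 * e) * ·) (congrArg (· * l) ?_)
  generalize symm₄ κ a b c d = E at *
  linear_combination (norm := noncomm_ring) ht + h * hr - h * hl

/-! ### Clearing denominators -/

theorem tilde₂ {κt : ι → A} (hκt : ∀ s, (x s + h) * κt s = κ s)
    (hc : ∀ s t, s ≠ t → Commute (x s + h) (κt t)) {a b : ι} (hab : a ≠ b) :
    (x a + h) * (x b + h) * symm₂ κt a b = symm₂ κ a b := by
  have h1 := move_letter hκt a (hc b a hab.symm) (D.comm_X _ _) (hκt b)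
  have h2 := move_letter hκt b (hc a b hab) (D.comm_X _ _) (hκt a)
  rw [(D.comm_X b a).eq] at h1
  rw [symm₂, mul_add, h1, h2, symm₂]

theorem tilde₃ {κt : ι → A} (hκt : ∀ s, (x s + h) * κt s = κ s)
    (hc : ∀ s t, s ≠ t → Commute (x s + h) (κt t)) {a b c : ι}
    (hab : a ≠ b) (hac : a ≠ c) (hbc : b ≠ c) :
    (x a + h) * (x b + h) * (x c + h) * symm₃ κt a b c = symm₃ κ a b c := by
  have h1 := move_letter hκt a ((hc b a hab.symm).mul_left (hc c a hac.symm))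
    ((D.comm_X _ _).mul_left (D.comm_X _ _)) (D.tilde₂ hκt hc hbc)
  have h2 := move_letter hκt b ((hc a b hab).mul_left (hc c b hbc.symm))
    ((D.comm_X _ _).mul_left (D.comm_X _ _)) (D.tilde₂ hκt hc hac)
  have h3 := move_letter hκt c ((hc a c hac).mul_left (hc b c hbc))
    ((D.comm_X _ _).mul_left (D.comm_X _ _)) (D.tilde₂ hκt hc hab)
  rw [D.rotate₃] at h1
  rw [D.swap₃] at h2
  rw [symm₃, mul_add, mul_add, h1, h2, h3, symm₃]

/-- Multiplication by all the `x s + h` clears the denominators of the symmetrised product of the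
letters `κt s`. -/
theorem tilde₄ {κt : ι → A} (hκt : ∀ s, (x s + h) * κt s = κ s)
    (hc : ∀ s t, s ≠ t → Commute (x s + h) (κt t)) {a b c d : ι}
    (hab : a ≠ b) (hac : a ≠ c) (had : a ≠ d) (hbc : b ≠ c) (hbd : b ≠ d) (hcd : c ≠ d) :
    (x a + h) * (x b + h) * (x c + h) * (x d + h) * symm₄ κt a b c d = symm₄ κ a b c d := by
  have hX (p q r s : ι) : Commute ((x p + h) * (x q + h) * (x r + h)) (x s + h) :=
    ((D.comm_X _ _).mul_left (D.comm_X _ _)).mul_left (D.comm_X _ _)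
  have h1 := move_letter hκt a (((hc b a hab.symm).mul_left (hc c a hac.symm)).mul_left
    (hc d a had.symm)) (hX _ _ _ _) (D.tilde₃ hκt hc hbc hbd hcd)
  have h2 := move_letter hκt b (((hc a b hab).mul_left (hc c b hbc.symm)).mul_left
    (hc d b hbd.symm)) (hX _ _ _ _) (D.tilde₃ hκt hc hac had hcd)
  have h3 := move_letter hκt c (((hc a c hac).mul_left (hc b c hbc)).mul_left
    (hc d c hcd.symm)) (hX _ _ _ _) (D.tilde₃ hκt hc hab had hbd)
  have h4 := move_letter hκt d (((hc a d had).mul_left (hc b d hbd)).mul_left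
    (hc c d hcd)) (hX _ _ _ _) (D.tilde₃ hκt hc hab hac hbc)
  rw [D.rotate₄] at h1
  rw [D.rotate₄'] at h2
  rw [D.swap₃] at h3
  rw [symm₄, mul_add, mul_add, mul_add, h1, h2, h3, h4, symm₄]

end ExchangeData

end Words

/-- The `n = 4` case of the combinatorial lemma:
`Σ_{σ∈S₄} [κ_{σ1},[κ_{σ2},[κ_{σ3},[κ_{σ4},lam]]]] = 2θ(2θ+η)(2θ+2η)(2θ+3η)·(Σ_{σ∈S₄} κ̃_{σ1}κ̃_{σ2}κ̃_{σ3}κ̃_{σ4})·lam`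
with `κ̃ₛ = (γₛ - g + θ)⁻¹ κₛ`. -/
theorem combinatorial_lemma_n4 (A : Type*) [Ring A] [Algebra ℂ A] (η θ : ℂ)
    (g : A) (γ κ : Fin 4 → A) (lam : A)
    (hγγ : ∀ s t, γ s * γ t = γ t * γ s) (hgγ : ∀ s, g * γ s = γ s * g)
    (hκγ : ∀ s, κ s * γ s - γ s * κ s = -(algebraMap ℂ A η * κ s))
    (hκγ' : ∀ s t, s ≠ t → κ s * γ t = γ t * κ s)
    (hκg : ∀ s, κ s * g = g * κ s)
    (hlγ : ∀ s, lam * γ s = γ s * lam)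
    (hbraid : ∀ s t, s ≠ t →
      (γ s - γ t - algebraMap ℂ A η) * (κ s * κ t)
        = (γ s - γ t + algebraMap ℂ A η) * (κ t * κ s))
    (hκl : ∀ s, (γ s - g - algebraMap ℂ A θ) * (κ s * lam)
      = (γ s - g + algebraMap ℂ A θ) * (lam * κ s))
    (hinv : ∀ p : ℤ, |p| ≤ 4 → ∀ s t, s ≠ t →
      IsUnit (γ s - γ t + algebraMap ℂ A ((p : ℂ) * η)) ∧
      IsUnit (γ s - g + algebraMap ℂ A (θ + (p : ℂ) * η)) ∧
      IsUnit (γ s - g + algebraMap ℂ A (-θ + (p : ℂ) * η)))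
    (κt : Fin 4 → A)
    (hκt : ∀ s, κt s = Ring.inverse (γ s - g + algebraMap ℂ A θ) * κ s) :
    ∑ σ : Equiv.Perm (Fin 4),
        cbrk (κ (σ 0)) (cbrk (κ (σ 1)) (cbrk (κ (σ 2)) (cbrk (κ (σ 3)) lam)))
      = algebraMap ℂ A (2 * θ * (2 * θ + η) * (2 * θ + 2 * η) * (2 * θ + 3 * η)) *
          (∑ σ : Equiv.Perm (Fin 4), κt (σ 0) * κt (σ 1) * κt (σ 2) * κt (σ 3)) * lam := by
  set e : A := algebraMap ℂ A η with he
  set h : A := algebraMap ℂ A θ with hh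
  have D : ExchangeData (fun s => γ s - g) κ e h lam := by
    refine ⟨Algebra.commutes η, Algebra.commutes θ, fun s t => ?_, fun s t hst => ?_,
      fun s t hst => ?_, hκl⟩
    · have c1 : Commute (γ s) (γ t) := hγγ s t
      have c2 : Commute (γ s) g := (hgγ s).symm
      have c3 : Commute g (γ t) := hgγ t
      exact (c1.sub_right c2).sub_left (c3.sub_right (Commute.refl g))
    · exact Commute.sub_right (hκγ' s t hst) (hκg s)
    · simpa only [sub_sub_sub_cancel_right] using hbraid s t hst
  have hX (s : Fin 4) : IsUnit (γ s - g + h) := by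
    obtain ⟨t, hst⟩ := exists_ne s
    simpa using (hinv 0 (by norm_num) s t hst.symm).2.1
  have hXκt (s : Fin 4) : (γ s - g + h) * κt s = κ s := by
    rw [hκt, ← mul_assoc, Ring.mul_inverse_cancel _ (hX s), one_mul]
  have hc (s t : Fin 4) (hst : s ≠ t) : Commute (γ s - g + h) (κt t) := by
    rw [hκt]
    refine Commute.mul_right ?_ (D.comm_Xκ hst)
    have hst' : Commute (γ s - g + h) (γ t - g + h) := D.comm_X s t
    obtain ⟨u, hu⟩ := hX t
    rw [← hu] at hst' ⊢
    rw [Ring.inverse_unit]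
    exact hst'.units_inv_right
  have h01 : (0 : Fin 4) ≠ 1 := by decide
  have h02 : (0 : Fin 4) ≠ 2 := by decide
  have h03 : (0 : Fin 4) ≠ 3 := by decide
  have h12 : (1 : Fin 4) ≠ 2 := by decide
  have h13 : (1 : Fin 4) ≠ 3 := by decide
  have h23 : (2 : Fin 4) ≠ 3 := by decide
  have hnest := D.nested₄ h01 h02 h03 h12 h13 h23
  have htilde := D.tilde₄ hXκt hc h01 h02 h03 h12 h13 h23
  have hC : algebraMap ℂ A (2 * θ * (2 * θ + η) * (2 * θ + 2 * η) * (2 * θ + 3 * η)) =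
      2 * h * (2 * h + e) * (2 * h + 2 * e) * (2 * h + 3 * e) := by
    simp only [map_mul, map_add, map_ofNat, he, hh]
  -- Both sides of the claim are now rewritten through the recursively grouped sums.
  have hL : ∑ σ : Equiv.Perm (Fin 4),
      cbrk (κ (σ 0)) (cbrk (κ (σ 1)) (cbrk (κ (σ 2)) (cbrk (κ (σ 3)) lam))) =
      nest₄ κ lam 0 1 2 3 := by
    rw [sum_perm_fin_four fun a b c d => cbrk (κ a) (cbrk (κ b) (cbrk (κ c) (cbrk (κ d) lam)))]
    simp only [nest₄, nest₃, nest₂, cbrk_add, ← add_assoc]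
  have hR : ∑ σ : Equiv.Perm (Fin 4), κt (σ 0) * κt (σ 1) * κt (σ 2) * κt (σ 3) =
      symm₄ κt 0 1 2 3 := by
    rw [sum_perm_fin_four fun a b c d => κt a * κt b * κt c * κt d]
    simp only [symm₄, symm₃, symm₂, mul_add, ← add_assoc, ← mul_assoc]
  rw [hL, hR]
  refine (((hX 0).mul (hX 1)).mul (hX 2)).mul (hX 3) |>.mul_left_cancel ?_
  rw [hnest, ← htilde, ← hC, mul_assoc _ _ lam, ← mul_assoc _ _ (_ * lam),
    Algebra.commutes]
  simp only [mul_assoc]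
end

section
/- For every index (i,k) and every function f, at every point γ (in the Cartan/difference-operator setting described in the context) at which all denominators occurring are nonzero: (κ_{i,k}(κ′_{i,k}f))(γ) = −d_i^{−1} · R_i(γ_{i,k}) · [∏_{s≠i} ∏_{r=1}^{−a_{si}} P_s(γ_{i,k} − (h/2)(α_i + rα_s,α_s); γ)] · [∏_{p≠k}(γ_{i,k} − γ_{i,p})]^{−1} · [∏_{p≠k}(γ_{i,k} − γ_{i,p} − (h/2)(α_i,α_i))]^{−1} · f(γ), and (κ′_{i,k}(κ_{i,k}f))(γ) = −d_i^{−1} · R_i(γ_{i,k} + (h/2)(α_i,α_i)) · [∏_{s≠i} ∏_{r=1}^{−a_{si}} P_s(γ_{i,k} − (h/2)(α_i + rα_s,α_s) + (h/2)(α_i,α_i); γ)] · [∏_{p≠k}(γ_{i,k} − γ_{i,p})]^{−1} · [∏_{p≠k}(γ_{i,k} − γ_{i,p} + (h/2)(α_i,α_i))]^{−1} · f(γ). -/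
/-!
Shifting `γ` by `c·e_{i,k}` leaves every `P_s` with `s ≠ i` unchanged (`Pp_sh`), replaces `γ_{i,k}`
by `γ_{i,k} + c` (`sh_self`), and moves only the first entry of each factor in the denominator
`∏_{p≠k} (γ_{i,k} − γ_{i,p})` (`Dk_sh`). The two shifts `∓ h d_i` are inverse to each other
(`sh_sh_of_add_eq_zero`), and since `(α_i, α_i)/2 = d_i` the arguments of the shifted factors are
exactly those claimed; the products over
`s < i` and `s > i` combine to one over `s ≠ i` (`prod_lt_mul_prod_gt`), and the two factors
`(√d_i)⁻¹` multiply to `d_i⁻¹` (`inv_sqrt_mul_inv_sqrt`).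
-/

open Finset

noncomputable section

variable {ℓ : ℕ}

/-- The pairing `(α_i, α_j) = d_i a_{ij}`, as a complex number. -/
def pr (a : Fin ℓ → Fin ℓ → ℤ) (d : Fin ℓ → ℕ) (i j : Fin ℓ) : ℂ :=
  (d i : ℂ) * (a i j : ℂ)

/-- Points: tuples `γ = (γ_{i,k})`, `i ∈ {1,…,ℓ}`, `1 ≤ k ≤ m_i`, of complex numbers. -/
abbrev Pt {ℓ : ℕ} (m : Fin ℓ → ℕ) : Type := ((i : Fin ℓ) × Fin (m i)) → ℂ

variable {m : Fin ℓ → ℕ}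

/-- `P_s(u; γ) = ∏_{p=1}^{m_s} (u − γ_{s,p})`. -/
def Pp (γ : Pt m) (s : Fin ℓ) (u : ℂ) : ℂ :=
  ∏ p : Fin (m s), (u - γ ⟨s, p⟩)

/-- The shifted point `γ + c·e_{i,k}`. -/
def sh (γ : Pt m) (i : Fin ℓ) (k : Fin (m i)) (c : ℂ) : Pt m :=
  fun x => if x = ⟨i, k⟩ then γ x + c else γ x

/-- The denominator `∏_{p ≠ k} (γ_{i,k} − γ_{i,p})` (an empty product equals 1). -/
def Dk (γ : Pt m) (i : Fin ℓ) (k : Fin (m i)) : ℂ :=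
  ∏ p ∈ Finset.univ.erase k, (γ ⟨i, k⟩ - γ ⟨i, p⟩)

/-- The difference operator `κ_{i,k}`:
`(κ_{i,k} f)(γ) = (√d_i)⁻¹ · [∏_{s>i} ∏_{r=1}^{−a_{si}} P_s(γ_{i,k} − (h/2)(α_i+rα_s,α_s); γ)]
  · [∏_{p≠k}(γ_{i,k} − γ_{i,p})]⁻¹ · f(γ − h d_i e_{i,k})`. -/
def kap (a : Fin ℓ → Fin ℓ → ℤ) (d : Fin ℓ → ℕ) (h : ℂ)
    (i : Fin ℓ) (k : Fin (m i)) (f : Pt m → ℂ) (γ : Pt m) : ℂ :=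
  ((Real.sqrt (d i) : ℝ) : ℂ)⁻¹ *
    (∏ s ∈ Finset.univ.filter (fun s => i < s), ∏ r ∈ Finset.range (-(a s i)).toNat,
      Pp γ s (γ ⟨i, k⟩ - h / 2 * (pr a d i s + ((r : ℂ) + 1) * pr a d s s))) *
    (Dk γ i k)⁻¹ * f (sh γ i k (-(h * (d i : ℂ))))

/-- The difference operator `κ′_{i,k}` (depending on the functions `R_i`):
`(κ′_{i,k} f)(γ) = −(√d_i)⁻¹ · R_i(γ_{i,k} + h d_i)
  · [∏_{s<i} ∏_{r=1}^{−a_{si}} P_s(γ_{i,k} − (h/2)(α_i+rα_s,α_s) + h d_i; γ)]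
  · [∏_{p≠k}(γ_{i,k} − γ_{i,p})]⁻¹ · f(γ + h d_i e_{i,k})`. -/
def kap' (a : Fin ℓ → Fin ℓ → ℤ) (d : Fin ℓ → ℕ) (h : ℂ) (R : Fin ℓ → ℂ → ℂ)
    (i : Fin ℓ) (k : Fin (m i)) (f : Pt m → ℂ) (γ : Pt m) : ℂ :=
  -((Real.sqrt (d i) : ℝ) : ℂ)⁻¹ * R i (γ ⟨i, k⟩ + h * (d i : ℂ)) *
    (∏ s ∈ Finset.univ.filter (fun s => s < i), ∏ r ∈ Finset.range (-(a s i)).toNat,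
      Pp γ s (γ ⟨i, k⟩ - h / 2 * (pr a d i s + ((r : ℂ) + 1) * pr a d s s) + h * (d i : ℂ))) *
    (Dk γ i k)⁻¹ * f (sh γ i k (h * (d i : ℂ)))

/-- The multiplication operator `H_i(u)`. -/
def Hop (a : Fin ℓ → Fin ℓ → ℤ) (d : Fin ℓ → ℕ) (h : ℂ) (R : Fin ℓ → ℂ → ℂ)
    (u : ℂ) (i : Fin ℓ) (f : Pt m → ℂ) (γ : Pt m) : ℂ :=
  R i u *
    (∏ s ∈ Finset.univ.filter (fun s => s ≠ i), ∏ r ∈ Finset.range (-(a s i)).toNat,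
      Pp γ s (u - h / 2 * (pr a d i s + ((r : ℂ) + 1) * pr a d s s))) *
    (Pp γ i u * Pp γ i (u - h * (d i : ℂ)))⁻¹ * f γ

/-- The operator `E_i(u) = Σ_{k=1}^{m_i} (u − γ_{i,k})⁻¹ κ_{i,k}`. -/
def Eop (a : Fin ℓ → Fin ℓ → ℤ) (d : Fin ℓ → ℕ) (h : ℂ)
    (u : ℂ) (i : Fin ℓ) (f : Pt m → ℂ) (γ : Pt m) : ℂ :=
  ∑ k : Fin (m i), (u - γ ⟨i, k⟩)⁻¹ * kap a d h i k f γ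

/-- The operator `F_i(u) = Σ_{k=1}^{m_i} κ′_{i,k} (u − γ_{i,k} − h d_i)⁻¹`. -/
def Fop (a : Fin ℓ → Fin ℓ → ℤ) (d : Fin ℓ → ℕ) (h : ℂ) (R : Fin ℓ → ℂ → ℂ)
    (u : ℂ) (i : Fin ℓ) (f : Pt m → ℂ) (γ : Pt m) : ℂ :=
  ∑ k : Fin (m i), (u - γ ⟨i, k⟩ - h * (d i : ℂ))⁻¹ * kap' a d h R i k f γ

/-- The zero mode `E_i^{(0)} = Σ_{k=1}^{m_i} κ_{i,k}`. -/
def E0 (a : Fin ℓ → Fin ℓ → ℤ) (d : Fin ℓ → ℕ) (h : ℂ)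
    (i : Fin ℓ) (f : Pt m → ℂ) (γ : Pt m) : ℂ :=
  ∑ k : Fin (m i), kap a d h i k f γ

lemma sh_self (γ : Pt m) (i : Fin ℓ) (k : Fin (m i)) (c : ℂ) :
    sh γ i k c ⟨i, k⟩ = γ ⟨i, k⟩ + c := by
  simp [sh]

lemma sh_sh_of_add_eq_zero (γ : Pt m) (i : Fin ℓ) (k : Fin (m i)) {c c' : ℂ} (hc : c + c' = 0) :
    sh (sh γ i k c) i k c' = γ := by
  funext x
  by_cases hx : x = ⟨i, k⟩
  · simp [sh, hx, add_assoc, hc]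
  · simp [sh, hx]

lemma Pp_sh (γ : Pt m) {i s : Fin ℓ} (hs : s ≠ i) (k : Fin (m i)) (c u : ℂ) :
    Pp (sh γ i k c) s u = Pp γ s u := by
  unfold Pp
  refine Finset.prod_congr rfl fun p _ => ?_
  have hne : (⟨s, p⟩ : (i : Fin ℓ) × Fin (m i)) ≠ ⟨i, k⟩ := fun e => hs (congrArg Sigma.fst e)
  simp [sh, hne]

lemma Dk_sh (γ : Pt m) (i : Fin ℓ) (k : Fin (m i)) (c : ℂ) :
    Dk (sh γ i k c) i k = ∏ p ∈ Finset.univ.erase k, (γ ⟨i, k⟩ - γ ⟨i, p⟩ + c) := by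
  unfold Dk
  refine Finset.prod_congr rfl fun p hp => ?_
  have hpk : p ≠ k := Finset.ne_of_mem_erase hp
  have hne : (⟨i, p⟩ : (i : Fin ℓ) × Fin (m i)) ≠ ⟨i, k⟩ := fun e => hpk (by simpa using e)
  rw [sh_self]
  simp only [sh, hne, if_false]
  ring

lemma prod_lt_mul_prod_gt (i : Fin ℓ) (F : Fin ℓ → ℂ) :
    (∏ s ∈ Finset.univ.filter (fun s => s < i), F s) *
      (∏ s ∈ Finset.univ.filter (fun s => i < s), F s) =
      ∏ s ∈ Finset.univ.filter (fun s => s ≠ i), F s := by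
  rw [← Finset.prod_union]
  · refine Finset.prod_congr ?_ fun _ _ => rfl
    ext s
    simp only [Finset.mem_union, Finset.mem_filter, Finset.mem_univ, true_and, lt_or_lt_iff_ne]
  · rw [Finset.disjoint_filter]
    exact fun s _ h1 h2 => lt_asymm h1 h2

lemma inv_sqrt_mul_inv_sqrt (n : ℕ) :
    ((Real.sqrt n : ℝ) : ℂ)⁻¹ * ((Real.sqrt n : ℝ) : ℂ)⁻¹ = (n : ℂ)⁻¹ := by
  rw [← mul_inv, ← Complex.ofReal_mul, Real.mul_self_sqrt n.cast_nonneg, Complex.ofReal_natCast]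

/-- The product relations (mn16) for `κ_{i,k} κ′_{i,k}` and `κ′_{i,k} κ_{i,k}`. -/
theorem kappa_kappa'_product
    (hℓ : 1 ≤ ℓ) (a : Fin ℓ → Fin ℓ → ℤ) (d : Fin ℓ → ℕ)
    (hdiag : ∀ i, a i i = 2) (hoff : ∀ i j, i ≠ j → a i j ≤ 0)
    (hdpos : ∀ i, 0 < d i) (hsymm : ∀ i j, (d i : ℤ) * a i j = (d j : ℤ) * a j i)
    (h : ℂ) (R : Fin ℓ → ℂ → ℂ)
    (i : Fin ℓ) (k : Fin (m i)) (f : Pt m → ℂ) (γ : Pt m)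
    (hden1 : Dk γ i k ≠ 0)
    (hden2 : (∏ p ∈ Finset.univ.erase k, (γ ⟨i, k⟩ - γ ⟨i, p⟩ - h / 2 * pr a d i i)) ≠ 0)
    (hden3 : (∏ p ∈ Finset.univ.erase k, (γ ⟨i, k⟩ - γ ⟨i, p⟩ + h / 2 * pr a d i i)) ≠ 0) :
    (kap a d h i k (kap' a d h R i k f) γ
      = -((d i : ℂ))⁻¹ * R i (γ ⟨i, k⟩) *
          (∏ s ∈ Finset.univ.filter (fun s => s ≠ i), ∏ r ∈ Finset.range (-(a s i)).toNat,
            Pp γ s (γ ⟨i, k⟩ - h / 2 * (pr a d i s + ((r : ℂ) + 1) * pr a d s s))) *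
          (Dk γ i k)⁻¹ *
          (∏ p ∈ Finset.univ.erase k, (γ ⟨i, k⟩ - γ ⟨i, p⟩ - h / 2 * pr a d i i))⁻¹ * f γ)
    ∧ (kap' a d h R i k (kap a d h i k f) γ
      = -((d i : ℂ))⁻¹ * R i (γ ⟨i, k⟩ + h / 2 * pr a d i i) *
          (∏ s ∈ Finset.univ.filter (fun s => s ≠ i), ∏ r ∈ Finset.range (-(a s i)).toNat,
            Pp γ s (γ ⟨i, k⟩ - h / 2 * (pr a d i s + ((r : ℂ) + 1) * pr a d s s)
              + h / 2 * pr a d i i)) *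
          (Dk γ i k)⁻¹ *
          (∏ p ∈ Finset.univ.erase k, (γ ⟨i, k⟩ - γ ⟨i, p⟩ + h / 2 * pr a d i i))⁻¹ * f γ) := by
  have hpr : h / 2 * pr a d i i = h * (d i : ℂ) := by
    rw [pr, hdiag]
    push_cast
    ring
  rw [hpr]
  constructor
  · rw [← prod_lt_mul_prod_gt, ← inv_sqrt_mul_inv_sqrt]
    simp only [kap, kap', sh_self, Dk_sh, sub_eq_add_neg (_ - _) (h * (d i : ℂ))]
    rw [sh_sh_of_add_eq_zero γ i k (neg_add_cancel _), neg_add_cancel_right]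
    -- `κ′` is evaluated at the shifted point: its own shift `+ h d_i` cancels the `− h d_i`.
    have hlt : ∀ s ∈ Finset.univ.filter (fun s => s < i),
        (∏ r ∈ Finset.range (-(a s i)).toNat, Pp (sh γ i k (-(h * (d i : ℂ)))) s
          (γ ⟨i, k⟩ + -(h * (d i : ℂ)) - h / 2 * (pr a d i s + ((r : ℂ) + 1) * pr a d s s)
            + h * (d i : ℂ))) =
        ∏ r ∈ Finset.range (-(a s i)).toNat, Pp γ s
          (γ ⟨i, k⟩ - h / 2 * (pr a d i s + ((r : ℂ) + 1) * pr a d s s)) := by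
      intro s hs
      refine Finset.prod_congr rfl fun r _ => ?_
      rw [Pp_sh γ (Finset.mem_filter.mp hs).2.ne]
      congr 1
      ring
    rw [Finset.prod_congr rfl hlt]
    ring
  · rw [← prod_lt_mul_prod_gt, ← inv_sqrt_mul_inv_sqrt]
    simp only [kap, kap', sh_self, Dk_sh]
    rw [sh_sh_of_add_eq_zero γ i k (add_neg_cancel _)]
    have hgt : ∀ s ∈ Finset.univ.filter (fun s => i < s),
        (∏ r ∈ Finset.range (-(a s i)).toNat, Pp (sh γ i k (h * (d i : ℂ))) s
          (γ ⟨i, k⟩ + h * (d i : ℂ) - h / 2 * (pr a d i s + ((r : ℂ) + 1) * pr a d s s))) =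
        ∏ r ∈ Finset.range (-(a s i)).toNat, Pp γ s
          (γ ⟨i, k⟩ - h / 2 * (pr a d i s + ((r : ℂ) + 1) * pr a d s s) + h * (d i : ℂ)) := by
      intro s hs
      refine Finset.prod_congr rfl fun r _ => ?_
      rw [Pp_sh γ (Finset.mem_filter.mp hs).2.ne']
      congr 1
      ring
    rw [Finset.prod_congr rfl hgt]
    ring

end
end

section
/- For all indices i, j ∈ {1,…,ℓ}, arbitrary functions R_i : ℂ → ℂ, all u, v ∈ ℂ with u ≠ v, and every function f, at every point γ (in the Cartan/difference-operator setting described in the context) at which all denominators occurring are nonzero: ((H_i(u)E_j(v) − E_j(v)H_i(u))f)(γ) = −(h/2)(α_i,α_j)·(u−v)^{−1} · ((H_i(u)(E_j(u)−E_j(v)) + (E_j(u)−E_j(v))H_i(u))f)(γ). -/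
/-!
Write `H_i(u)` as multiplication by `g` and put `x = γ_{j,k}`, `A = (h/2)(α_i,α_j)`, and
`γ' = γ − h d_j e_{j,k}`. Every term of `E_j` carries one `κ_{j,k}`, which evaluates `g` at `γ'`,
so the relation can be compared term by term in `k`. Since
`(u−x)⁻¹ − (v−x)⁻¹ = −(u−v)(u−x)⁻¹(v−x)⁻¹`, it reduces to the exchange relation
`(u − x − A) g(γ) = (u − x + A) g(γ')` (`Hmul_exchange`).

For `i = j` the shift only changes the `k`-th factors of `P_i(u) P_i(u − h d_i)`, and `A = h d_i`.
For `i ≠ j` it only changes the factor `s = j` of the numerator. There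
`A = −(h/2) N d_j` with `N = −a_{ji}`, by symmetry of the pairing, and the affected factors are
`∏_{r=1}^{N} (u − x − A − r h d_j)` before and `∏_{r=0}^{N-1} (u − x − A − r h d_j)` after the
shift, so the ratio telescopes (`prod_telescope`).
-/

open Finset

noncomputable section

variable {ℓ : ℕ}

variable {m : Fin ℓ → ℕ}

/-- The function by which `H_i(u)` multiplies. -/
def Hmul (a : Fin ℓ → Fin ℓ → ℤ) (d : Fin ℓ → ℕ) (h : ℂ) (R : Fin ℓ → ℂ → ℂ)
    (u : ℂ) (i : Fin ℓ) (γ : Pt m) : ℂ :=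
  R i u *
    (∏ s ∈ Finset.univ.filter (fun s => s ≠ i), ∏ r ∈ Finset.range (-(a s i)).toNat,
      Pp γ s (u - h / 2 * (pr a d i s + ((r : ℂ) + 1) * pr a d s s))) *
    (Pp γ i u * Pp γ i (u - h * (d i : ℂ)))⁻¹

/-- The coefficient of the shift in the difference operator `κ_{i,k}`. -/
def kapCoeff (a : Fin ℓ → Fin ℓ → ℤ) (d : Fin ℓ → ℕ) (h : ℂ)
    (i : Fin ℓ) (k : Fin (m i)) (γ : Pt m) : ℂ :=
  ((Real.sqrt (d i) : ℝ) : ℂ)⁻¹ *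
    (∏ s ∈ Finset.univ.filter (fun s => i < s), ∏ r ∈ Finset.range (-(a s i)).toNat,
      Pp γ s (γ ⟨i, k⟩ - h / 2 * (pr a d i s + ((r : ℂ) + 1) * pr a d s s))) *
    (Dk γ i k)⁻¹

/-- `P_j(z)` with its `k`-th factor removed. -/
def PpErase (γ : Pt m) (j : Fin ℓ) (k : Fin (m j)) (z : ℂ) : ℂ :=
  ∏ p ∈ Finset.univ.erase k, (z - γ ⟨j, p⟩)

lemma Pp_eq_mul_PpErase (γ : Pt m) (j : Fin ℓ) (k : Fin (m j)) (z : ℂ) :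
    Pp γ j z = (z - γ ⟨j, k⟩) * PpErase γ j k z :=
  (Finset.mul_prod_erase Finset.univ (fun p => z - γ ⟨j, p⟩) (Finset.mem_univ k)).symm

lemma Pp_sh_self (γ : Pt m) (j : Fin ℓ) (k : Fin (m j)) (c z : ℂ) :
    Pp (sh γ j k c) j z = (z - γ ⟨j, k⟩ - c) * PpErase γ j k z := by
  rw [Pp_eq_mul_PpErase (sh γ j k c) j k z]
  congr 1
  · simp [sh, sub_sub]
  · refine Finset.prod_congr rfl fun p hp => ?_
    simp [sh, Finset.ne_of_mem_erase hp]

lemma Pp_sh_of_ne (γ : Pt m) {j s : Fin ℓ} (hs : s ≠ j) (k : Fin (m j)) (c z : ℂ) :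
    Pp (sh γ j k c) s z = Pp γ s z := by
  refine Finset.prod_congr rfl fun p _ => ?_
  have : (⟨s, p⟩ : (i : Fin ℓ) × Fin (m i)) ≠ ⟨j, k⟩ := fun e => hs (congrArg Sigma.fst e)
  simp [sh, this]

lemma prod_telescope (N : ℕ) (F : ℕ → ℂ) :
    F 0 * ∏ r ∈ Finset.range N, F (r + 1) = F N * ∏ r ∈ Finset.range N, F r := by
  rw [mul_comm, ← Finset.prod_range_succ', Finset.prod_range_succ, mul_comm]

/-- For `i = j`, the denominator factors `(u − x)(u − h d_i − x)` become
`(u − x + h d_i)(u − x)` under the shift. -/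
lemma Hmul_exchange_self (a : Fin ℓ → Fin ℓ → ℤ) (d : Fin ℓ → ℕ) (hdiag : ∀ i, a i i = 2)
    (h : ℂ) (R : Fin ℓ → ℂ → ℂ) (i : Fin ℓ) (u : ℂ) (γ : Pt m) (k : Fin (m i))
    (hP : Pp γ i u * Pp γ i (u - h * (d i : ℂ)) ≠ 0)
    (hPs : Pp (sh γ i k (-(h * (d i : ℂ)))) i u *
        Pp (sh γ i k (-(h * (d i : ℂ)))) i (u - h * (d i : ℂ)) ≠ 0) :
    (u - γ ⟨i, k⟩ - h / 2 * pr a d i i) * Hmul a d h R u i γ =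
      (u - γ ⟨i, k⟩ + h / 2 * pr a d i i) *
        Hmul a d h R u i (sh γ i k (-(h * (d i : ℂ)))) := by
  have hA : h / 2 * pr a d i i = h * (d i : ℂ) := by
    simp only [pr, hdiag]; push_cast; ring
  have hnum : (∏ s ∈ Finset.univ.filter (fun s => s ≠ i),
        ∏ r ∈ Finset.range (-(a s i)).toNat, Pp (sh γ i k (-(h * (d i : ℂ)))) s
          (u - h / 2 * (pr a d i s + ((r : ℂ) + 1) * pr a d s s))) =
      ∏ s ∈ Finset.univ.filter (fun s => s ≠ i), ∏ r ∈ Finset.range (-(a s i)).toNat,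
        Pp γ s (u - h / 2 * (pr a d i s + ((r : ℂ) + 1) * pr a d s s)) :=
    Finset.prod_congr rfl fun s hs => Finset.prod_congr rfl fun r _ =>
      Pp_sh_of_ne γ (Finset.mem_filter.mp hs).2 k _ _
  rw [hA]
  unfold Hmul
  rw [hnum]
  rw [Pp_sh_self, Pp_sh_self] at hPs ⊢
  rw [Pp_eq_mul_PpErase γ i k, Pp_eq_mul_PpErase γ i k] at hP ⊢
  have h1 := left_ne_zero_of_mul (left_ne_zero_of_mul hP)
  have h2 := right_ne_zero_of_mul (left_ne_zero_of_mul hP)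
  have h3 := left_ne_zero_of_mul (right_ne_zero_of_mul hP)
  have h4 := right_ne_zero_of_mul (right_ne_zero_of_mul hP)
  have h5 := left_ne_zero_of_mul (left_ne_zero_of_mul hPs)
  have h6 := left_ne_zero_of_mul (right_ne_zero_of_mul hPs)
  generalize PpErase γ i k u = Q at *
  generalize PpErase γ i k (u - h * (d i : ℂ)) = Q' at *
  generalize γ ⟨i, k⟩ = x at *
  generalize h * (d i : ℂ) = e at *
  generalize (∏ s ∈ Finset.univ.filter (fun s => s ≠ i), ∏ r ∈ Finset.range (-(a s i)).toNat,
      Pp γ s (u - h / 2 * (pr a d i s + ((r : ℂ) + 1) * pr a d s s))) = C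
  field_simp
  ring

/-- For `i ≠ j` the shift leaves the denominator of the multiplier alone, so nothing has to be
assumed nonzero. -/
lemma Hmul_exchange_of_ne (a : Fin ℓ → Fin ℓ → ℤ) (d : Fin ℓ → ℕ) (hdiag : ∀ i, a i i = 2)
    (hoff : ∀ i j, i ≠ j → a i j ≤ 0)
    (hsymm : ∀ i j, (d i : ℤ) * a i j = (d j : ℤ) * a j i)
    (h : ℂ) (R : Fin ℓ → ℂ → ℂ) {i j : Fin ℓ} (hij : i ≠ j) (u : ℂ) (γ : Pt m)
    (k : Fin (m j)) :
    (u - γ ⟨j, k⟩ - h / 2 * pr a d i j) * Hmul a d h R u i γ =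
      (u - γ ⟨j, k⟩ + h / 2 * pr a d i j) *
        Hmul a d h R u i (sh γ j k (-(h * (d j : ℂ)))) := by
  have hj : j ∈ Finset.univ.filter (fun s => s ≠ i) := by simp [hij.symm]
  have hN : (((-(a j i)).toNat : ℕ) : ℂ) = -(a j i : ℂ) := by
    have : (((-(a j i)).toNat : ℕ) : ℤ) = -(a j i) :=
      Int.toNat_of_nonneg (by have := hoff j i hij.symm; omega)
    exact_mod_cast congrArg (Int.cast : ℤ → ℂ) this
  have hpr : pr a d i j = -((d j : ℂ) * (((-(a j i)).toNat : ℕ) : ℂ)) := by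
    rw [hN, pr]
    have := congrArg (Int.cast : ℤ → ℂ) (hsymm i j)
    push_cast at this
    rw [this]; ring
  have hjj : pr a d j j = 2 * (d j : ℂ) := by
    simp only [pr, hdiag]; push_cast; ring
  have hrest : (∏ s ∈ (Finset.univ.filter (fun s => s ≠ i)).erase j,
        ∏ r ∈ Finset.range (-(a s i)).toNat, Pp (sh γ j k (-(h * (d j : ℂ)))) s
          (u - h / 2 * (pr a d i s + ((r : ℂ) + 1) * pr a d s s))) =
      ∏ s ∈ (Finset.univ.filter (fun s => s ≠ i)).erase j,
        ∏ r ∈ Finset.range (-(a s i)).toNat,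
          Pp γ s (u - h / 2 * (pr a d i s + ((r : ℂ) + 1) * pr a d s s)) :=
    Finset.prod_congr rfl fun s hs => Finset.prod_congr rfl fun r _ =>
      Pp_sh_of_ne γ (Finset.ne_of_mem_erase hs) k _ _
  have hkey : (u - γ ⟨j, k⟩ - h / 2 * pr a d i j) *
        (∏ r ∈ Finset.range (-(a j i)).toNat,
          Pp γ j (u - h / 2 * (pr a d i j + ((r : ℂ) + 1) * pr a d j j))) =
      (u - γ ⟨j, k⟩ + h / 2 * pr a d i j) *
        (∏ r ∈ Finset.range (-(a j i)).toNat, Pp (sh γ j k (-(h * (d j : ℂ)))) j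
          (u - h / 2 * (pr a d i j + ((r : ℂ) + 1) * pr a d j j))) := by
    simp only [Pp_sh_self, Pp_eq_mul_PpErase γ j k, Finset.prod_mul_distrib]
    rw [← mul_assoc, ← mul_assoc]
    congr 1
    have ht := prod_telescope (-(a j i)).toNat
      (fun r => u - γ ⟨j, k⟩ - h / 2 * pr a d i j - (r : ℂ) * (h * (d j : ℂ)))
    convert ht using 2
    · push_cast; ring
    · refine Finset.prod_congr rfl fun r _ => ?_
      rw [hjj]; push_cast; ring
    · rw [hpr]; ring
    · refine Finset.prod_congr rfl fun r _ => ?_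
      rw [hjj]; ring
  unfold Hmul
  rw [Pp_sh_of_ne γ hij, Pp_sh_of_ne γ hij, ← Finset.mul_prod_erase _ _ hj,
    ← Finset.mul_prod_erase _ _ hj, hrest]
  generalize (∏ s ∈ (Finset.univ.filter (fun s => s ≠ i)).erase j,
    ∏ r ∈ Finset.range (-(a s i)).toNat,
      Pp γ s (u - h / 2 * (pr a d i s + ((r : ℂ) + 1) * pr a d s s))) = C
  generalize (Pp γ i u * Pp γ i (u - h * (d i : ℂ)))⁻¹ = D
  linear_combination (R i u * C * D) * hkey

/-- The exchange relation between the multiplier of `H_i(u)` and the shift in `κ_{j,k}`. -/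
lemma Hmul_exchange (a : Fin ℓ → Fin ℓ → ℤ) (d : Fin ℓ → ℕ) (hdiag : ∀ i, a i i = 2)
    (hoff : ∀ i j, i ≠ j → a i j ≤ 0)
    (hsymm : ∀ i j, (d i : ℤ) * a i j = (d j : ℤ) * a j i)
    (h : ℂ) (R : Fin ℓ → ℂ → ℂ) (i j : Fin ℓ) (u : ℂ) (γ : Pt m) (k : Fin (m j))
    (hP : Pp γ i u * Pp γ i (u - h * (d i : ℂ)) ≠ 0)
    (hPs : Pp (sh γ j k (-(h * (d j : ℂ)))) i u *
        Pp (sh γ j k (-(h * (d j : ℂ)))) i (u - h * (d i : ℂ)) ≠ 0) :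
    (u - γ ⟨j, k⟩ - h / 2 * pr a d i j) * Hmul a d h R u i γ =
      (u - γ ⟨j, k⟩ + h / 2 * pr a d i j) *
        Hmul a d h R u i (sh γ j k (-(h * (d j : ℂ)))) := by
  rcases eq_or_ne i j with rfl | hij
  · exact Hmul_exchange_self a d hdiag h R i u γ k hP hPs
  · exact Hmul_exchange_of_ne a d hdiag hoff hsymm h R hij u γ k

/-- The relation `[H_i(u), E_j(v)] = −(h/2)(α_i,α_j)·(u−v)⁻¹·[H_i(u), E_j(u)−E_j(v)]₊`
for the explicit difference operators. -/
theorem H_E_commutation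
    (hℓ : 1 ≤ ℓ) (a : Fin ℓ → Fin ℓ → ℤ) (d : Fin ℓ → ℕ)
    (hdiag : ∀ i, a i i = 2) (hoff : ∀ i j, i ≠ j → a i j ≤ 0)
    (hdpos : ∀ i, 0 < d i) (hsymm : ∀ i j, (d i : ℤ) * a i j = (d j : ℤ) * a j i)
    (h : ℂ) (R : Fin ℓ → ℂ → ℂ)
    (i j : Fin ℓ) (u v : ℂ) (huv : u ≠ v)
    (f : Pt m → ℂ) (γ : Pt m)
    (hP : Pp γ i u * Pp γ i (u - h * (d i : ℂ)) ≠ 0)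
    (hPs : ∀ l : Fin (m j),
      Pp (sh γ j l (-(h * (d j : ℂ)))) i u *
        Pp (sh γ j l (-(h * (d j : ℂ)))) i (u - h * (d i : ℂ)) ≠ 0)
    (hD : ∀ l : Fin (m j), Dk γ j l ≠ 0)
    (hu : ∀ l : Fin (m j), u - γ ⟨j, l⟩ ≠ 0)
    (hv : ∀ l : Fin (m j), v - γ ⟨j, l⟩ ≠ 0) :
    Hop a d h R u i (Eop a d h v j f) γ - Eop a d h v j (Hop a d h R u i f) γ
      = -(h / 2 * pr a d i j) * (u - v)⁻¹ *
          (Hop a d h R u i (fun γ' => Eop a d h u j f γ' - Eop a d h v j f γ') γ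
            + (Eop a d h u j (Hop a d h R u i f) γ
                - Eop a d h v j (Hop a d h R u i f) γ)) := by
  have hH : ∀ F : Pt m → ℂ, Hop a d h R u i F = fun γ' => Hmul a d h R u i γ' * F γ' :=
    fun _ => rfl
  have hE : ∀ (w : ℂ) (F : Pt m → ℂ), Eop a d h w j F γ = ∑ k : Fin (m j),
      (w - γ ⟨j, k⟩)⁻¹ * (kapCoeff a d h j k γ * F (sh γ j k (-(h * (d j : ℂ))))) :=
    fun _ _ => rfl
  simp only [hH, hE]
  simp only [← Finset.sum_sub_distrib, Finset.mul_sum, ← Finset.sum_add_distrib]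
  refine Finset.sum_congr rfl fun k _ => ?_
  have hex := Hmul_exchange a d hdiag hoff hsymm h R i j u γ k hP (hPs k)
  have huk := hu k
  have hvk := hv k
  have huv' : u - v ≠ 0 := sub_ne_zero.mpr huv
  generalize Hmul a d h R u i γ = g at *
  generalize Hmul a d h R u i (sh γ j k (-(h * (d j : ℂ)))) = g' at *
  generalize f (sh γ j k (-(h * (d j : ℂ)))) = y at *
  generalize kapCoeff a d h j k γ = c at *
  generalize γ ⟨j, k⟩ = x at *
  have hinv : (u - x)⁻¹ - (v - x)⁻¹ = -(u - v) * ((u - x)⁻¹ * (v - x)⁻¹) := by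
    field_simp
    ring
  have hone : (u - x)⁻¹ * (u - x) = 1 := inv_mul_cancel₀ huk
  have huv1 : (u - v)⁻¹ * (u - v) = 1 := inv_mul_cancel₀ huv'
  generalize pr a d i j = q at *
  calc _ = (v - x)⁻¹ * c * y * ((u - x)⁻¹ * (u - x)) * (g - g') := by rw [hone]; ring
    _ = (u - x)⁻¹ * (v - x)⁻¹ * c * y * (h / 2 * q * (g + g')) := by
        linear_combination ((u - x)⁻¹ * (v - x)⁻¹ * c * y) * hex
    _ = (h / 2 * q) * ((u - v)⁻¹ * (u - v)) * ((u - x)⁻¹ * (v - x)⁻¹) * (c * y * (g + g')) := by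
        rw [huv1]; ring
    _ = -(h / 2 * q) * (u - v)⁻¹ * (((u - x)⁻¹ - (v - x)⁻¹) * (c * y * (g + g'))) := by
        rw [hinv]; ring
    _ = _ := by ring

end
end
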